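/- arXiv:1211.3716 — 9 statements merged into one kernel-verified Lean document; each statement's English description precedes it below -/
import Mathlib

section
/- Let H be a real Hilbert space, let S be a bounded self-adjoint operator on H with ⟨f, S f⟩ ≤ 0 for all f ∈ H, let A be a bounded skew-adjoint operator on H (i.e. A* = −A), set L = S + A, and let λ > 0. Then λ − S and λ − L are boundedly invertible, and for every w ∈ H one has ⟨w, (λ − L)⁻¹ w⟩ = sup over f ∈ H of { 2⟨w, f⟩ − ⟨f, (λ − S) f⟩ − ⟨A f, (λ − S)⁻¹ A f⟩ }. -/
/-!
Write `P = lam - S`, a symmetric operator with `lam * ‖f‖ ^ 2 ≤ ⟪f, P f⟫`, and let `w = P u - A u`,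
so that `u` is the resolvent applied to `w`. Since `A` is skew, `⟪w, u⟫ = ⟪u, P u⟫`. For any `f`
put `v = P⁻¹ A f`. Skewness of `A` gives `⟪f, P v⟫ = ⟪f, A f⟫ = 0` and
`⟪w, f⟫ = ⟪P u, f + v⟫`, so completing the square turns the functional at `f` into
`⟪u, P u⟫ - ⟪u - f - v, P (u - f - v)⟫` (`variational_eq`). This is at most `⟪w, u⟫`, with equality
when `f + v = u`; such an `f` is the midpoint of `u` and the solution `g` of the adjoint equation
`P g + A g = w`. The three inverses needed, of `P` and `P ∓ A`, come from Lax–Milgram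
(`exists_inverse_of_coercive`).
-/

open scoped RealInnerProductSpace

/-- Lax–Milgram in operator form: a bounded operator bounded below as a quadratic form has a
bounded two-sided inverse. -/
theorem exists_inverse_of_coercive {H : Type*} [NormedAddCommGroup H] [InnerProductSpace ℝ H]
    [CompleteSpace H] (M : H →L[ℝ] H) {c : ℝ} (hc : 0 < c)
    (hM : ∀ f : H, c * ‖f‖ ^ 2 ≤ ⟪f, M f⟫) :
    ∃ T : H →L[ℝ] H, M ∘L T = 1 ∧ T ∘L M = 1 := by
  have hco : IsCoercive ((innerSL ℝ).comp M : H →L[ℝ] H →L[ℝ] ℝ) := by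
    refine ⟨c, hc, fun f => ?_⟩
    have h := hM f
    rw [real_inner_comm] at h
    simpa [pow_two, mul_assoc] using h
  have he : ∀ x, hco.continuousLinearEquivOfBilin x = M x := fun x =>
    ext_inner_right ℝ fun y => by
      rw [hco.continuousLinearEquivOfBilin_apply]
      simp
  refine ⟨(hco.continuousLinearEquivOfBilin.symm : H →L[ℝ] H), ?_, ?_⟩
  · ext x
    simp [← he]
  · ext x
    simp [← he]

/-- Completing the square in the functional, where `v` plays the role of `P⁻¹ A f`. -/
theorem variational_eq {H : Type*} [NormedAddCommGroup H] [InnerProductSpace ℝ H]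
    (P A : H →L[ℝ] H) (hP : ∀ x y : H, ⟪P x, y⟫ = ⟪x, P y⟫)
    (hA : ∀ x y : H, ⟪A x, y⟫ = -⟪x, A y⟫) {u w f v : H}
    (hu : P u - A u = w) (hv : P v = A f) :
    2 * ⟪w, f⟫ - ⟪f, P f⟫ - ⟪A f, v⟫ = ⟪w, u⟫ - ⟪u - (f + v), P (u - (f + v))⟫ := by
  have hAu : ⟪A u, u⟫ = 0 := by
    have h1 := hA u u
    rw [real_inner_comm (A u) u] at h1
    linarith
  have hAf : ⟪f, P v⟫ = 0 := by
    have h1 := hA f f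
    rw [hv]
    rw [real_inner_comm f (A f)] at h1
    linarith
  have h1 : ⟪A u, f⟫ = -⟪u, P v⟫ := by rw [hA, hv]
  have h2 : ⟪P u, u⟫ = ⟪u, P u⟫ := hP u u
  have h3 : ⟪P u, f⟫ = ⟪u, P f⟫ := hP u f
  have h4 : ⟪f, P u⟫ = ⟪u, P f⟫ := by rw [← hP, real_inner_comm]
  have h5 : ⟪v, P u⟫ = ⟪u, P v⟫ := by rw [← hP, real_inner_comm]
  have h6 : ⟪v, P f⟫ = ⟪f, P v⟫ := by rw [← hP, real_inner_comm]
  have h7 : ⟪P v, v⟫ = ⟪v, P v⟫ := hP v v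
  rw [← hv, ← hu]
  simp only [map_sub, map_add, inner_sub_left, inner_sub_right, inner_add_left, inner_add_right]
  linarith

/-- **Variational formula for the resolvent quadratic form.**
Let `H` be a real Hilbert space, `S` a bounded self-adjoint operator with
`⟪f, S f⟫ ≤ 0` for all `f`, `A` a bounded skew-adjoint operator, `L = S + A`
and `lam > 0`.  Then `lam - S` and `lam - L` are boundedly invertible and for
every `w`,
`⟪w, (lam - L)⁻¹ w⟫ = sup_f { 2⟪w,f⟫ - ⟪f,(lam - S) f⟫ - ⟪A f, (lam - S)⁻¹ A f⟫ }`. -/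
theorem resolvent_variational_formula
    (H : Type*) [NormedAddCommGroup H] [InnerProductSpace ℝ H] [CompleteSpace H]
    (S A : H →L[ℝ] H)
    (hS : ContinuousLinearMap.adjoint S = S)
    (hSneg : ∀ f : H, ⟪f, S f⟫ ≤ 0)
    (hA : ContinuousLinearMap.adjoint A = -A)
    (lam : ℝ) (hlam : 0 < lam) :
    ∃ R T : H →L[ℝ] H,
      (lam • (1 : H →L[ℝ] H) - S) ∘L R = 1 ∧ R ∘L (lam • (1 : H →L[ℝ] H) - S) = 1 ∧
      (lam • (1 : H →L[ℝ] H) - (S + A)) ∘L T = 1 ∧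
      T ∘L (lam • (1 : H →L[ℝ] H) - (S + A)) = 1 ∧
      ∀ w : H,
        IsLUB (Set.range fun f : H =>
            2 * ⟪w, f⟫ - ⟪f, (lam • (1 : H →L[ℝ] H) - S) f⟫ - ⟪A f, R (A f)⟫)
          ⟪w, T w⟫ := by
  set P : H →L[ℝ] H := lam • (1 : H →L[ℝ] H) - S with hPdef
  have hAs : ∀ x y : H, ⟪A x, y⟫ = -⟪x, A y⟫ := fun x y => by
    rw [← ContinuousLinearMap.adjoint_inner_right, hA]
    simp
  have hSs : ∀ x y : H, ⟪S x, y⟫ = ⟪x, S y⟫ := fun x y => by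
    rw [← ContinuousLinearMap.adjoint_inner_right, hS]
  have hPs : ∀ x y : H, ⟪P x, y⟫ = ⟪x, P y⟫ := fun x y => by
    simp [hPdef, inner_sub_left, inner_sub_right, inner_smul_left, inner_smul_right, hSs]
  have hAz : ∀ x : H, ⟪x, A x⟫ = 0 := fun x => by
    have h := hAs x x
    rw [real_inner_comm] at h
    linarith
  have hPc : ∀ f : H, lam * ‖f‖ ^ 2 ≤ ⟪f, P f⟫ := fun f => by
    have h := hSneg f
    simp only [hPdef, sub_apply, smul_apply, one_apply_eq_self, inner_sub_right, inner_smul_right,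
      real_inner_self_eq_norm_sq]
    linarith
  have hL : lam • (1 : H →L[ℝ] H) - (S + A) = P - A := by
    rw [hPdef, sub_sub]
  rw [hL]
  obtain ⟨R, hR1, hR2⟩ := exists_inverse_of_coercive P hlam hPc
  obtain ⟨T, hT1, hT2⟩ := exists_inverse_of_coercive (P - A) hlam fun f => by
    simpa [inner_sub_right, hAz] using hPc f
  obtain ⟨T', hT'1, -⟩ := exists_inverse_of_coercive (P + A) hlam fun f => by
    simpa [inner_add_right, hAz] using hPc f
  refine ⟨R, T, hR1, hR2, hT1, hT2, fun w => ?_⟩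
  have hPR : ∀ x, P (R x) = x := fun x => DFunLike.congr_fun hR1 x
  have hRP : ∀ x, R (P x) = x := fun x => DFunLike.congr_fun hR2 x
  have hu : P (T w) - A (T w) = w := DFunLike.congr_fun hT1 w
  have hg : P (T' w) + A (T' w) = w := DFunLike.congr_fun hT'1 w
  have key := fun f : H => variational_eq P A hPs hAs hu (hPR (A f))
  refine IsGreatest.isLUB ⟨⟨(1 / 2 : ℝ) • (T w + T' w), ?_⟩, ?_⟩
  · -- Subtracting the two equations gives `P (u - g) = A (u + g)`, so at the midpoint of
    -- `u` and `g` the vector `P⁻¹ A f` is `(u - g) / 2` and the square vanishes.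
    have hv : R (A ((1 / 2 : ℝ) • (T w + T' w))) = (1 / 2 : ℝ) • (T w - T' w) := by
      rw [← hRP ((1 / 2 : ℝ) • (T w - T' w))]
      congr 1
      simp only [map_smul, map_add, map_sub]
      congr 1
      rw [add_comm, ← sub_eq_zero, ← sub_eq_zero.mpr (hg.trans hu.symm)]
      abel
    have hz : T w - ((1 / 2 : ℝ) • (T w + T' w) + (1 / 2 : ℝ) • (T w - T' w)) = 0 := by
      module
    simp only [key]
    rw [hv, hz, map_zero, inner_zero_left, sub_zero]
  · rintro _ ⟨f, rfl⟩
    simp only [key]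
    have h := hPc (T w - (f + R (A f)))
    have : 0 ≤ lam * ‖T w - (f + R (A f))‖ ^ 2 := by positivity
    linarith
end

section
/- Let d ≥ 1, K ≥ 1 and ρ ∈ (0,1). Suppose that for each y ∈ ℤ^d with 0 < |y| ≤ K we are given a nonnegative local function r(y,·) on {0,1}^{ℤ^d} which does not depend on the coordinates η₀ and η_y, and set r(y,·) ≡ 0 for |y| > K. Assume the divergence condition: there exist local functions R₁, …, R_d such that for every configuration η, Σ_y r(y, η)(η_y − η₀) = Σ_{i=1}^d ( R_i(η) − R_i(τ_{e_i} η) ). Then for every local function f : {0,1}^{ℤ^d} → ℝ one has ∫ L f dπ_ρ = 0, where L f(η) = Σ_{x ∈ ℤ^d} Σ_y r(y, τ_{−x} η) · η_x (1 − η_{x+y}) · ( f(η^{x,x+y}) − f(η) ) (a sum with only finitely many nonzero terms, since f(η^{x,x+y}) − f(η) = 0 unless x or x+y lies in the finite set of coordinates on which f depends). In other words, the product Bernoulli(ρ) measures are invariant for the lattice gas generator. -/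
/-!
The measure `π` is the infinite product of a single measure on `Bool`
(`eq_infinitePi_of_cylinder`), so it is preserved by every injective relabelling of the sites, in
particular by shifts and by exchanges of two coordinates, and local functions with disjoint supports
are independent under it.

Since `r(y, τ_{-x} η)` does not involve `η_x` and `η_{x+y}`, the change of variables
`η ↦ η^{x,x+y}` gives
`∫ r(y, τ_{-x} η) η_x (1 - η_{x+y}) (f(η^{x,x+y}) - f(η)) = ∫ r(y, τ_{-x} η) (η_{x+y} - η_x) f(η)`
(`integral_term`). Summing over `y` and inserting the divergence condition at `τ_{-x} η`, the
contribution of the site `x` is `∑ i, (c i x - c i (x - e_i))`, where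
`c i x = ∫ R_i(τ_{-x} η) f(η) - (∫ R_i) (∫ f)` is the covariance of `R_i ∘ τ_{-x}` and `f`
(subtracting the constant is harmless in a difference). By independence `c i` has finite support
(`exists_finset_cov_eq_zero`), so the sum over all `x` telescopes to zero. Working with covariances
replaces the discussion of boundary terms of a large box.
-/

open MeasureTheory

/-- Sites of the `d`-dimensional lattice `ℤ^d`. -/
abbrev Site (d : ℕ) := Fin d → ℤ

/-- Particle configurations on `ℤ^d`: `0/1` at each site. -/
abbrev Config (d : ℕ) := Site d → Bool

/-- Numerical value of an occupation variable. -/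
def bval (b : Bool) : ℝ := if b then 1 else 0

/-- A function of configurations is local if it depends on finitely many coordinates. -/
def IsLocal {d : ℕ} (f : Config d → ℝ) : Prop :=
  ∃ S : Finset (Site d), ∀ η η' : Config d, (∀ x ∈ S, η x = η' x) → f η = f η'

/-- The shift `(τ_x η)_z = η_{z - x}`. -/
def shiftCfg {d : ℕ} (x : Site d) (η : Config d) : Config d := fun z => η (z - x)

/-- The configuration `η^{u,v}` with the occupation variables at `u` and `v` exchanged. -/
def swapCfg {d : ℕ} (η : Config d) (u v : Site d) : Config d :=
  Function.update (Function.update η u (η v)) v (η u)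

/-- The lattice gas generator
`L f(η) = Σ_x Σ_y r(y, τ_{-x} η) η_x (1-η_{x+y}) (f(η^{x,x+y}) - f(η))`. -/
noncomputable def latticeGasGen {d : ℕ} (r : Site d → Config d → ℝ)
    (f : Config d → ℝ) (η : Config d) : ℝ :=
  ∑ᶠ x : Site d, ∑ᶠ y : Site d,
    r y (shiftCfg (-x) η) * bval (η x) * (1 - bval (η (x + y))) *
      (f (swapCfg η x (x + y)) - f η)

open ProbabilityTheory

/-! ### Local functions -/

namespace IsLocal

variable {d : ℕ} {f g : Config d → ℝ}

lemma map₂ (op : ℝ → ℝ → ℝ) (hf : IsLocal f) (hg : IsLocal g) :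
    IsLocal (fun η => op (f η) (g η)) := by
  classical
  obtain ⟨S, hS⟩ := hf
  obtain ⟨T, hT⟩ := hg
  refine ⟨S ∪ T, fun η η' h => ?_⟩
  simp only [hS η η' fun x hx => h x (Finset.mem_union_left _ hx),
    hT η η' fun x hx => h x (Finset.mem_union_right _ hx)]

lemma mul (hf : IsLocal f) (hg : IsLocal g) : IsLocal (fun η => f η * g η) := hf.map₂ (· * ·) hg

lemma sub (hf : IsLocal f) (hg : IsLocal g) : IsLocal (fun η => f η - g η) := hf.map₂ (· - ·) hg

lemma const (c : ℝ) : IsLocal (fun _ : Config d => c) := ⟨∅, fun _ _ _ => rfl⟩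

lemma eval (x : Site d) : IsLocal (fun η : Config d => bval (η x)) :=
  ⟨{x}, fun η η' h => by simp only [h x (Finset.mem_singleton_self x)]⟩

lemma relabel (hf : IsLocal f) (e : Site d → Site d) : IsLocal (fun η => f (fun z => η (e z))) := by
  classical
  obtain ⟨S, hS⟩ := hf
  exact ⟨S.image e, fun η η' h => hS _ _ fun x hx => h _ (Finset.mem_image_of_mem e hx)⟩

lemma shift (hf : IsLocal f) (x : Site d) : IsLocal (fun η => f (shiftCfg x η)) :=
  hf.relabel (fun z => z - x)

end IsLocal

lemma exists_eq_comp_restrict {d : ℕ} {f : Config d → ℝ} {S : Finset (Site d)}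
    (hS : ∀ η η' : Config d, (∀ x ∈ S, η x = η' x) → f η = f η') :
    ∃ g : (S → Bool) → ℝ, f = fun η => g (fun x => η x) := by
  classical
  refine ⟨fun w => f (fun x => if h : x ∈ S then w ⟨x, h⟩ else false), funext fun η => ?_⟩
  exact hS _ _ fun x hx => by simp [hx]

lemma IsLocal.integrable {d : ℕ} {f : Config d → ℝ} (hf : IsLocal f) (π : Measure (Config d))
    [IsProbabilityMeasure π] : Integrable f π := by
  obtain ⟨S, hS⟩ := hf
  obtain ⟨g, rfl⟩ := exists_eq_comp_restrict hS
  have hm : Measurable (fun (η : Config d) (x : S) => η x) := by fun_prop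
  have : IsProbabilityMeasure (π.map (fun (η : Config d) (x : S) => η x)) :=
    Measure.isProbabilityMeasure_map hm.aemeasurable
  exact (Integrable.of_finite (f := g)).comp_measurable hm

lemma IsLocal.measurable {d : ℕ} {f : Config d → ℝ} (hf : IsLocal f) : Measurable f := by
  obtain ⟨S, hS⟩ := hf
  obtain ⟨g, rfl⟩ := exists_eq_comp_restrict hS
  exact (Measurable.of_discrete (f := g)).comp (by fun_prop)

/-! ### The product measure -/

/-- A measure with product cylinder probabilities is the infinite product measure. -/
lemma eq_infinitePi_of_cylinder {d : ℕ} {ρ : ℝ} (hρ : ρ ∈ Set.Ioo (0 : ℝ) 1)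
    (π : Measure (Config d))
    (hπ : ∀ (S : Finset (Site d)) (v : Site d → Bool),
      π {η : Config d | ∀ x ∈ S, η x = v x}
        = ∏ x ∈ S, ENNReal.ofReal (if v x then ρ else 1 - ρ)) :
    ∃ m : Measure Bool, ∃ _ : IsProbabilityMeasure m,
      π = Measure.infinitePi (fun _ : Site d => m) := by
  classical
  let m : Measure Bool :=
    ENNReal.ofReal ρ • Measure.dirac true + ENNReal.ofReal (1 - ρ) • Measure.dirac false
  have hm (b : Bool) : m {b} = ENNReal.ofReal (if b then ρ else 1 - ρ) := by
    cases b <;> simp [m]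
  have hprob : IsProbabilityMeasure m := ⟨by
    simp only [m, Measure.coe_add, Measure.coe_smul, Pi.add_apply, Pi.smul_apply, measure_univ,
      smul_eq_mul, mul_one]
    rw [← ENNReal.ofReal_add hρ.1.le (by linarith [hρ.2])]
    simp⟩
  refine ⟨m, hprob, IsProjectiveLimit.unique (P := fun S => Measure.pi fun _ : S => m)
    (fun S => ?_) (Measure.isProjectiveLimit_infinitePi _)⟩
  refine Measure.ext_of_singleton fun w => ?_
  rw [Measure.map_apply (by fun_prop) (measurableSet_singleton w), Measure.pi_singleton]
  let v : Site d → Bool := fun x => if h : x ∈ S then w ⟨x, h⟩ else false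
  have hset : S.restrict ⁻¹' ({w} : Set (S → Bool)) = {η : Config d | ∀ x ∈ S, η x = v x} := by
    ext η
    simp only [Set.mem_preimage, Set.mem_singleton_iff, Set.mem_ofPred_eq, funext_iff,
      Subtype.forall, Finset.restrict]
    refine forall₂_congr fun x hx => ?_
    simp [v, hx]
  rw [hset, hπ, ← Finset.prod_coe_sort]
  exact Finset.prod_congr rfl fun x _ => by simp [hm, v]

section Product

variable {d : ℕ} (m : Measure Bool) [IsProbabilityMeasure m]

lemma integral_relabel {f : Config d → ℝ} (hf : IsLocal f) {e : Site d → Site d}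
    (he : Function.Injective e) :
    ∫ η, f (fun z => η (e z)) ∂(Measure.infinitePi fun _ : Site d => m)
      = ∫ η, f η ∂(Measure.infinitePi fun _ : Site d => m) := by
  have h := Measure.map_infinitePi_infinitePi_of_inj (P := fun _ : Site d => m) he
  conv_rhs => rw [← h]
  have hm : Measurable (fun (η : Config d) (z : Site d) => η (e z)) :=
    measurable_pi_lambda _ fun z => measurable_pi_apply (e z)
  rw [integral_map hm.aemeasurable hf.measurable.aestronglyMeasurable]

lemma integral_mul_of_disjoint {f g : Config d → ℝ} {S T : Finset (Site d)}
    (hS : ∀ η η' : Config d, (∀ x ∈ S, η x = η' x) → f η = f η')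
    (hT : ∀ η η' : Config d, (∀ x ∈ T, η x = η' x) → g η = g η') (hST : Disjoint S T) :
    ∫ η, f η * g η ∂(Measure.infinitePi fun _ : Site d => m)
      = (∫ η, f η ∂(Measure.infinitePi fun _ : Site d => m))
        * ∫ η, g η ∂(Measure.infinitePi fun _ : Site d => m) := by
  have hfm := (IsLocal.measurable ⟨S, hS⟩).aestronglyMeasurable
    (μ := Measure.infinitePi fun _ : Site d => m)
  have hgm := (IsLocal.measurable ⟨T, hT⟩).aestronglyMeasurable
    (μ := Measure.infinitePi fun _ : Site d => m)
  refine IndepFun.integral_fun_mul_eq_mul_integral ?_ hfm hgm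
  obtain ⟨f', rfl⟩ := exists_eq_comp_restrict hS
  obtain ⟨g', rfl⟩ := exists_eq_comp_restrict hT
  have hind := iIndepFun_infinitePi (P := fun _ : Site d => m) (X := fun _ b => b)
    (fun _ => measurable_id)
  exact (hind.indepFun_finset S T hST (fun i => by fun_prop)).comp
    (φ := f') (ψ := g') .of_discrete .of_discrete

/-- The covariance of a shifted local function with a local function vanishes for all but finitely
many shifts. -/
lemma exists_finset_cov_eq_zero {R f : Config d → ℝ} (hR : IsLocal R) (hf : IsLocal f) :
    ∃ A : Finset (Site d), ∀ x ∉ A,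
      ∫ η, R (shiftCfg (-x) η) * f η ∂(Measure.infinitePi fun _ : Site d => m)
        - (∫ η, R η ∂(Measure.infinitePi fun _ : Site d => m))
          * ∫ η, f η ∂(Measure.infinitePi fun _ : Site d => m) = 0 := by
  classical
  obtain ⟨T, hT⟩ := id hR
  obtain ⟨S, hS⟩ := hf
  refine ⟨(S ×ˢ T).image fun p => p.1 - p.2, fun x hx => ?_⟩
  have hdisj : Disjoint (T.image fun z => z - -x) S := by
    rw [Finset.disjoint_left]
    intro _ hz hs
    obtain ⟨t, ht, rfl⟩ := Finset.mem_image.1 hz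
    exact hx (Finset.mem_image.2 ⟨(t - -x, t), Finset.mk_mem_product hs ht, by simp⟩)
  rw [integral_mul_of_disjoint m (f := fun η => R (shiftCfg (-x) η))
    (S := T.image fun z => z - -x) (T := S)
    (fun η η' h => hT _ _ fun z hz => h _ (Finset.mem_image_of_mem _ hz)) hS hdisj]
  have := integral_relabel m hR (e := fun z => z - -x) sub_left_injective
  rw [← this, sub_eq_zero]
  rfl

end Product

/-! ### The generator -/

section Generator

variable {d : ℕ}

lemma swapCfg_eq (η : Config d) (u v : Site d) :
    swapCfg η u v = fun z => η (Equiv.swap u v z) := by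
  funext z
  simp only [swapCfg, Function.update_apply, Equiv.swap_apply_def]
  split_ifs <;> simp_all

lemma shiftCfg_neg_apply (x : Site d) (η : Config d) (z : Site d) :
    shiftCfg (-x) η z = η (z + x) := by
  simp [shiftCfg]

/-- Exchanging the coordinates `x` and `x + y`, on which the rate does not depend, moves the
increment of `f` onto the occupation variables. -/
lemma integral_term (m : Measure Bool) [IsProbabilityMeasure m] {r : Config d → ℝ}
    (hr : IsLocal r) {f : Config d → ℝ} (hf : IsLocal f) (x y : Site d)
    (hind : ∀ η η', (∀ z, z ≠ 0 → z ≠ y → η z = η' z) → r η = r η') :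
    ∫ η, r (shiftCfg (-x) η) * bval (η x) * (1 - bval (η (x + y)))
        * (f (swapCfg η x (x + y)) - f η) ∂(Measure.infinitePi fun _ : Site d => m)
      = ∫ η, r (shiftCfg (-x) η) * (bval (η (x + y)) - bval (η x)) * f η
          ∂(Measure.infinitePi fun _ : Site d => m) := by
  let π := Measure.infinitePi fun _ : Site d => m
  let H : Config d → ℝ := fun η =>
    r (shiftCfg (-x) η) * bval (η (x + y)) * (1 - bval (η x)) * f η
  let G : Config d → ℝ := fun η =>
    r (shiftCfg (-x) η) * bval (η x) * (1 - bval (η (x + y))) * f η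
  have hone (z : Site d) : IsLocal (fun η : Config d => 1 - bval (η z)) :=
    (IsLocal.const 1).sub (.eval z)
  have hH : IsLocal H := (((hr.shift (-x)).mul (.eval _)).mul (hone _)).mul hf
  have hG : IsLocal G := (((hr.shift (-x)).mul (.eval _)).mul (hone _)).mul hf
  have hHs : IsLocal (fun η => H (fun z => η (Equiv.swap x (x + y) z))) := hH.relabel _
  have hrate (η : Config d) :
      r (shiftCfg (-x) (fun z => η (Equiv.swap x (x + y) z))) = r (shiftCfg (-x) η) := by
    refine hind _ _ fun z h0 hy => ?_
    simp only [shiftCfg_neg_apply]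
    rw [Equiv.swap_apply_of_ne_of_ne]
    · simpa using h0
    · rw [add_comm x y]
      simpa using hy
  calc _ = ∫ η, (H (fun z => η (Equiv.swap x (x + y) z)) - G η) ∂π := by
        refine integral_congr_ae (.of_forall fun η => ?_)
        simp only [H, G, hrate, Equiv.swap_apply_left, Equiv.swap_apply_right, swapCfg_eq]
        ring
    _ = (∫ η, H η ∂π) - ∫ η, G η ∂π := by
        rw [integral_sub (hHs.integrable π) (hG.integrable π),
          integral_relabel m hH (Equiv.swap x (x + y)).injective]
    _ = ∫ η, (H η - G η) ∂π := (integral_sub (hH.integrable π) (hG.integrable π)).symm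
    _ = _ := by
        refine integral_congr_ae (.of_forall fun η => ?_)
        simp only [H, G]
        ring

/-- The defining sums of the generator run over finite sets of sites not depending on the
configuration, and the set of sites `x` may be enlarged at will. -/
lemma latticeGasGen_eq_sum {r : Site d → Config d → ℝ} {f : Config d → ℝ} (hf : IsLocal f)
    (B : Finset (Site d)) (hB : ∀ y ∉ B, ∀ η, r y η = 0) :
    ∃ A₀ : Finset (Site d), ∀ A, A₀ ⊆ A → ∀ η, latticeGasGen r f η
      = ∑ x ∈ A, ∑ y ∈ B, r y (shiftCfg (-x) η) * bval (η x) * (1 - bval (η (x + y))) *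
          (f (swapCfg η x (x + y)) - f η) := by
  classical
  obtain ⟨S, hS⟩ := hf
  refine ⟨S ∪ (S ×ˢ B).image (fun p => p.1 - p.2), fun A hA η => ?_⟩
  have hy (x : Site d) : (∑ᶠ y : Site d, r y (shiftCfg (-x) η) * bval (η x) *
      (1 - bval (η (x + y))) * (f (swapCfg η x (x + y)) - f η))
      = ∑ y ∈ B, r y (shiftCfg (-x) η) * bval (η x) * (1 - bval (η (x + y))) *
          (f (swapCfg η x (x + y)) - f η) := by
    refine finsum_eq_finsetSum_of_support_subset _ fun y hy => ?_
    by_contra hyB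
    exact hy (by simp [hB y hyB])
  simp only [latticeGasGen, hy]
  refine finsum_eq_finsetSum_of_support_subset _ fun x hx => hA ?_
  by_contra hxA
  refine hx (Finset.sum_eq_zero fun y hyB => ?_)
  have hx1 : x ∉ S := fun h => hxA (Finset.mem_union_left _ h)
  have hx2 : x + y ∉ S := fun h => hxA (Finset.mem_union_right _
    (Finset.mem_image.2 ⟨(x + y, y), Finset.mk_mem_product h hyB, by simp⟩))
  have : f (swapCfg η x (x + y)) = f η := by
    refine hS _ _ fun z hz => ?_
    simp only [swapCfg_eq]
    rw [Equiv.swap_apply_of_ne_of_ne]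
    · rintro rfl; exact hx1 hz
    · rintro rfl; exact hx2 hz
  rw [this, sub_self, mul_zero]

end Generator

/-- A finitely supported function on the lattice has vanishing total discrete derivative. -/
lemma exists_sum_sub_shift_eq_zero {d : ℕ} (c : Site d → ℝ) (e : Site d) (S : Finset (Site d))
    (hS : ∀ x ∉ S, c x = 0) :
    ∃ A₀ : Finset (Site d), ∀ A, A₀ ⊆ A → ∑ x ∈ A, (c x - c (x - e)) = 0 := by
  classical
  refine ⟨S ∪ S.image (· + e), fun A hA => ?_⟩
  rw [Finset.sum_sub_distrib, sub_eq_zero]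
  have h1 : ∑ᶠ x, c x = ∑ x ∈ A, c x :=
    finsum_eq_finsetSum_of_support_subset _ fun x hx =>
      hA (Finset.mem_union_left _ (by by_contra h; exact hx (hS x h)))
  have h2 : ∑ᶠ x, c (x - e) = ∑ x ∈ A, c (x - e) :=
    finsum_eq_finsetSum_of_support_subset _ fun x hx =>
      hA (Finset.mem_union_right _ (Finset.mem_image.2
        ⟨x - e, by by_contra h; exact hx (hS _ h), by simp⟩))
  rw [← h1, ← h2]
  exact (finsum_comp_equiv (Equiv.subRight e) (f := c)).symm

/-- **Invariance of the Bernoulli product measures.**  For a local coercive lattice gas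
whose rates satisfy the divergence condition, one has `∫ L f dπ_ρ = 0` for every local
function `f`; here `π` is any probability measure with product Bernoulli(`ρ`) cylinder
probabilities, i.e. the product Bernoulli measure. -/
theorem bernoulli_invariant_of_divergence_condition
    (d K : ℕ) (hd : 1 ≤ d) (hK : 1 ≤ K) (ρ : ℝ) (hρ : ρ ∈ Set.Ioo (0 : ℝ) 1)
    (r : Site d → Config d → ℝ)
    (hr_nonneg : ∀ y η, 0 ≤ r y η)
    (hr_local : ∀ y, IsLocal (r y))
    (hr_indep : ∀ y η η', (∀ z, z ≠ 0 → z ≠ y → η z = η' z) → r y η = r y η')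
    (hr_range : ∀ y η, (∃ i, (K : ℤ) < |y i|) → r y η = 0)
    (hr_zero : ∀ η, r 0 η = 0)
    (R : Fin d → Config d → ℝ)
    (hR_local : ∀ i, IsLocal (R i))
    (hdiv : ∀ η : Config d,
      (∑ᶠ y : Site d, r y η * (bval (η y) - bval (η 0)))
        = ∑ i : Fin d, (R i η - R i (shiftCfg (Pi.single i 1) η)))
    (π : Measure (Config d)) [IsProbabilityMeasure π]
    (hπ : ∀ (S : Finset (Site d)) (v : Site d → Bool),
      π {η : Config d | ∀ x ∈ S, η x = v x}
        = ∏ x ∈ S, ENNReal.ofReal (if v x then ρ else 1 - ρ))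
    (f : Config d → ℝ) (hf : IsLocal f) :
    ∫ η, latticeGasGen r f η ∂π = 0 := by
  classical
  obtain ⟨m, hm, rfl⟩ := eq_infinitePi_of_cylinder hρ π hπ
  set π : Measure (Config d) := Measure.infinitePi fun _ : Site d => m with hπ_def
  let B : Finset (Site d) := Fintype.piFinset fun _ => Finset.Icc (-(K : ℤ)) K
  have hB : ∀ y ∉ B, ∀ η, r y η = 0 := fun y hy η => by
    refine hr_range y η ?_
    by_contra! h
    exact hy (Fintype.mem_piFinset.2 fun i => Finset.mem_Icc.2 (abs_le.1 (h i)))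
  have hdivB (η : Config d) : ∑ y ∈ B, r y η * (bval (η y) - bval (η 0))
      = ∑ i : Fin d, (R i η - R i (shiftCfg (Pi.single i 1) η)) := by
    rw [← hdiv η]
    refine (finsum_eq_finsetSum_of_support_subset _ fun y hy => ?_).symm
    by_contra hyB
    exact hy (by simp [hB y hyB])
  let c (i : Fin d) (x : Site d) : ℝ :=
    ∫ η, R i (shiftCfg (-x) η) * f η ∂π - (∫ η, R i η ∂π) * ∫ η, f η ∂π
  have hsite (x : Site d) :
      ∑ y ∈ B, ∫ η, r y (shiftCfg (-x) η) * bval (η x) * (1 - bval (η (x + y)))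
        * (f (swapCfg η x (x + y)) - f η) ∂π
      = ∑ i : Fin d, (c i x - c i (x - Pi.single i 1)) := by
    have hloc (y : Site d) : IsLocal (fun η : Config d =>
        r y (shiftCfg (-x) η) * (bval (η (x + y)) - bval (η x)) * f η) :=
      (((hr_local y).shift (-x)).mul ((IsLocal.eval _).sub (.eval _))).mul hf
    have hRloc (i : Fin d) (z : Site d) : IsLocal (fun η => R i (shiftCfg (-z) η) * f η) :=
      ((hR_local i).shift (-z)).mul hf
    calc _ = ∑ y ∈ B, ∫ η, r y (shiftCfg (-x) η) * (bval (η (x + y)) - bval (η x)) * f η ∂π :=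
          Finset.sum_congr rfl fun y _ => integral_term m (hr_local y) hf x y (hr_indep y)
      _ = ∫ η, ∑ y ∈ B, r y (shiftCfg (-x) η) * (bval (η (x + y)) - bval (η x)) * f η ∂π :=
          (integral_finsetSum _ fun y _ => (hloc y).integrable π).symm
      _ = ∫ η, ∑ i : Fin d, (R i (shiftCfg (-x) η) * f η
            - R i (shiftCfg (-(x - Pi.single i 1)) η) * f η) ∂π := by
          refine integral_congr_ae (.of_forall fun η => ?_)
          have h := hdivB (shiftCfg (-x) η)
          simp only [shiftCfg_neg_apply, zero_add] at h
          simp only [← sub_mul, ← Finset.sum_mul]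
          congr 1
          simp only [add_comm x]
          rw [h]
          refine Finset.sum_congr rfl fun i _ => ?_
          congr 2
          funext z
          simp only [shiftCfg]
          congr 1
          abel
      _ = ∑ i : Fin d, (∫ η, R i (shiftCfg (-x) η) * f η ∂π
            - ∫ η, R i (shiftCfg (-(x - Pi.single i 1)) η) * f η ∂π) := by
          rw [integral_finsetSum _ fun i _ => ((hRloc i _).sub (hRloc i _)).integrable π]
          exact Finset.sum_congr rfl fun i _ =>
            integral_sub ((hRloc i _).integrable π) ((hRloc i _).integrable π)
      _ = _ := Finset.sum_congr rfl fun i _ => by simp only [c]; ring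
  obtain ⟨A₀, hA₀⟩ := latticeGasGen_eq_sum hf B hB
  choose S hS using fun i => exists_finset_cov_eq_zero m (hR_local i) hf
  choose A₁ hA₁ using fun i => exists_sum_sub_shift_eq_zero (c i) (Pi.single i 1) (S i) (hS i)
  let A := A₀ ∪ Finset.univ.biUnion A₁
  have hloc (x y : Site d) : IsLocal (fun η : Config d => r y (shiftCfg (-x) η) * bval (η x)
      * (1 - bval (η (x + y))) * (f (swapCfg η x (x + y)) - f η)) := by
    simp only [swapCfg_eq]
    exact ((((hr_local y).shift (-x)).mul (.eval _)).mul ((IsLocal.const 1).sub (.eval _))).mul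
      ((hf.relabel _).sub hf)
  simp only [hA₀ A Finset.subset_union_left]
  rw [integral_finsetSum _ fun x _ => integrable_finsetSum _ fun y _ => (hloc x y).integrable π]
  simp only [integral_finsetSum _ fun y _ => (hloc _ y).integrable π, hsite]
  rw [Finset.sum_comm]
  exact Finset.sum_eq_zero fun i _ => hA₁ i A ((Finset.subset_biUnion_of_mem A₁
    (Finset.mem_univ i)).trans Finset.subset_union_right)
end

section
/- There exists a constant C < ∞ such that for every integer m ≥ 3, every finitely supported function f : ℤ₊^m → ℝ and every point y ∈ ℤ₊^m, one has f(y)² ≤ C · 𝓔_m(f). -/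
/-!
The Dirichlet form is that of a network with unit conductances, so the claim says that the
effective resistance from any point to infinity is bounded, uniformly in the point and in `m`.

Deleting edges only increases the resistance. Keep the points `y + z`, where `z ∈ ℤ₊³` acts on
the first three coordinates, and the edges along `e₁`, `e₂ - e₁`, `e₃ - e₂` between them; these
moves stay in the orthant whatever `y` is. For each `z` the three edges
`z → z + e₁ → z + e₂ → z + e₃` form a path (`sum_edges_le` bounds the energy they carry), so by the
triangle inequality the energy of the nearest-neighbour octant `ℤ₊³` is at most a constant times
the Dirichlet form. It remains to see that the octant is transient from its corner
(`octant_bound`).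

For this, use the flow given by the three-colour Pólya urn: from `z` on level `n = z₁ + z₂ + z₃`
the urn moves to `z + eᵢ` with probability `(zᵢ + 1) / (n + 3)`, and its law on level `n` is
uniform, with mass `2 / ((n + 1) (n + 2))` at each point. Its edge probabilities form a unit flow
from the corner to infinity (`urn_unit_flow`), of energy at most
`∑_z (2 / ((n + 1) (n + 2)))² ≤ 4` (`urn_energy_le`), and Cauchy-Schwarz concludes.
-/

/-- The `j`-th move vector of the dimension-reduced exclusion walk on `ℤ₊^m`:
`e₁, e₂-e₁, …, e_m-e_{m-1}, -e_m` (0-indexed); together with their negatives these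
form the list `V_m`. -/
def stepVec (m : ℕ) (j : Fin (m + 1)) : Fin m → ℤ :=
  fun i => (if (i : ℕ) = (j : ℕ) then 1 else 0) - (if (i : ℕ) + 1 = (j : ℕ) then 1 else 0)

/-- The move `v` is allowed at `y ∈ ℤ₊^m` iff `y + v` stays in `ℤ₊^m`. -/
def okMove {m : ℕ} (v : Fin m → ℤ) (y : Fin m → ℕ) : Prop :=
  ∀ i, 0 ≤ (y i : ℤ) + v i

instance {m : ℕ} (v : Fin m → ℤ) (y : Fin m → ℕ) : Decidable (okMove v y) := by
  unfold okMove; infer_instance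

/-- The result `y + v` of an allowed move. -/
def moveTo {m : ℕ} (v : Fin m → ℤ) (y : Fin m → ℕ) : Fin m → ℕ :=
  fun i => ((y i : ℤ) + v i).toNat

/-- The exclusion Dirichlet form
`𝓔_m(f) = (1/2) Σ_{y ∈ ℤ₊^m} Σ_{v ∈ V_m} [y+v ∈ ℤ₊^m] (f(y+v) - f(y))²`. -/
noncomputable def exclDirichlet (m : ℕ) (f : (Fin m → ℕ) → ℝ) : ℝ :=
  (1 / 2) * ∑ᶠ y : Fin m → ℕ, ∑ j : Fin (m + 1), ∑ ε ∈ ({1, -1} : Finset ℤ),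
    (if okMove (ε • stepVec m j) y then (f (moveTo (ε • stepVec m j) y) - f y) ^ 2 else 0)

/-! ### Energy of the urn flow -/

/-- Telescoping: a nonnegative potential `F` dominates every partial sum of its decrements. -/
lemma sum_le_of_decrement (F u : ℕ → ℝ) (hF : ∀ n, 0 ≤ F n) (h : ∀ n, u n ≤ F n - F (n + 1))
    (N : ℕ) : ∑ n ∈ Finset.range N, u n ≤ F 0 := by
  calc ∑ n ∈ Finset.range N, u n ≤ ∑ n ∈ Finset.range N, (F n - F (n + 1)) :=
        Finset.sum_le_sum fun n _ => h n
    _ = F 0 - F N := Finset.sum_range_sub' F N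
    _ ≤ F 0 := by linarith [hF N]

/-- The total energy of the urn flow is at most `4`: each of the three sums telescopes. -/
lemma urn_energy_le (N : ℕ) :
    ∑ a ∈ Finset.range N, ∑ b ∈ Finset.range N, ∑ c ∈ Finset.range N,
      (2 / (((a : ℝ) + b + c + 1) * (a + b + c + 2))) ^ 2 ≤ 4 := by
  have h1 : ∀ s : ℝ, 0 ≤ s → ∑ c ∈ Finset.range N, (2 / ((s + c + 1) * (s + c + 2))) ^ 2
      ≤ 8 / ((s + 1) * (s + 2) * (s + 3)) := by
    intro s hs
    have := sum_le_of_decrement (fun c => 8 / ((s + c + 1) * (s + c + 2) * (s + c + 3)))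
      (fun c => (2 / ((s + c + 1) * (s + c + 2))) ^ 2) (fun n => by positivity) ?_ N
    · simpa using this
    · intro n
      push_cast
      obtain ⟨t, ht⟩ : ∃ t : ℝ, t = s + n := ⟨_, rfl⟩
      have ht0 : 0 ≤ t := by rw [ht]; positivity
      rw [← add_assoc, ← ht]
      have e : 8 / ((t + 1) * (t + 2) * (t + 3)) - 8 / ((t + 1 + 1) * (t + 1 + 2) * (t + 1 + 3))
          = 24 / ((t + 1) * (t + 2) * (t + 3) * (t + 4)) := by
        have : t + 1 + 1 = t + 2 := by ring
        have h2 : t + 1 + 2 = t + 3 := by ring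
        have h3 : t + 1 + 3 = t + 4 := by ring
        rw [this, h2, h3]
        field_simp
        ring
      rw [e, div_pow, div_le_div_iff₀ (by positivity) (by positivity)]
      have : 0 ≤ (t + 1) * (t + 2) * t := by positivity
      nlinarith [mul_nonneg this ht0]
  have h2 : ∀ s : ℝ, 0 ≤ s → ∑ b ∈ Finset.range N, 8 / ((s + b + 1) * (s + b + 2) * (s + b + 3))
      ≤ 4 / ((s + 1) * (s + 2)) := by
    intro s hs
    have := sum_le_of_decrement (fun c => 4 / ((s + c + 1) * (s + c + 2)))
      (fun c => 8 / ((s + c + 1) * (s + c + 2) * (s + c + 3))) (fun n => by positivity) ?_ N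
    · simpa using this
    · intro n
      push_cast
      obtain ⟨t, ht⟩ : ∃ t : ℝ, t = s + n := ⟨_, rfl⟩
      have ht0 : 0 ≤ t := by rw [ht]; positivity
      rw [← add_assoc, ← ht]
      have h3 : t + 1 + 1 = t + 2 := by ring
      have h4 : t + 1 + 2 = t + 3 := by ring
      rw [h3, h4]
      apply le_of_eq
      field_simp
      ring
  have h3 : ∑ a ∈ Finset.range N, 4 / (((a : ℝ) + 1) * (a + 2)) ≤ 4 := by
    have := sum_le_of_decrement (fun c => 4 / ((c : ℝ) + 1))
      (fun c => 4 / (((c : ℝ) + 1) * (c + 2))) (fun n => by positivity) ?_ N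
    · simpa using this
    · intro n
      push_cast
      have h3 : (n : ℝ) + 1 + 1 = n + 2 := by ring
      rw [h3]
      apply le_of_eq
      field_simp
      ring
  refine le_trans (Finset.sum_le_sum fun a _ => ?_) h3
  refine le_trans (Finset.sum_le_sum fun b _ => ?_) (h2 a (by positivity))
  exact h1 (a + b) (by positivity)

/-! ### Flow conservation and transience of the octant -/

lemma sum_shift (u : ℕ → ℝ) (N : ℕ) (h0 : u 0 = 0) (hN : u N = 0) :
    ∑ a ∈ Finset.range N, u (a + 1) = ∑ a ∈ Finset.range N, u a := by
  have h1 := Finset.sum_range_succ u N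
  have h2 := Finset.sum_range_succ' u N
  linarith

/-- The mass sent by the urn flow along an edge leaving a vertex of level `n` in a direction
whose coordinate is `a`: `(a + 1) / (n + 3)` times the mass `2 / ((n + 1) (n + 2))` at that
vertex. -/
noncomputable def urnFlow (a n : ℝ) : ℝ := 2 * (a + 1) / ((n + 1) * (n + 2) * (n + 3))

/-- Summation by parts: the urn flow is a unit flow from the corner to infinity, so pairing it
with the discrete gradient of `g` recovers the value at the corner. -/
lemma urn_unit_flow (g : ℕ → ℕ → ℕ → ℝ) (N : ℕ) (hpos : 0 < N)
    (hg : ∀ a b c, N ≤ a ∨ N ≤ b ∨ N ≤ c → g a b c = 0) :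
    g 0 0 0 = ∑ a ∈ Finset.range N, ∑ b ∈ Finset.range N, ∑ c ∈ Finset.range N,
      (urnFlow a (a + b + c) * (g a b c - g (a + 1) b c)
        + urnFlow b (a + b + c) * (g a b c - g a (b + 1) c)
        + urnFlow c (a + b + c) * (g a b c - g a b (c + 1))) := by
  -- `I k n` is the mass arriving at a vertex of level `n` along a coordinate equal to `k`;
  -- at `k = 0` it vanishes, also at the corner, where the denominator is zero.
  let I : ℝ → ℝ → ℝ := fun k n => 2 * k / (n * (n + 1) * (n + 2))
  have hI : ∀ k n : ℝ, I (k + 1) (n + 1) = urnFlow k n := by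
    intro k n
    simp only [I, urnFlow]
    ring_nf
  have h1 : ∑ a ∈ Finset.range N, ∑ b ∈ Finset.range N, ∑ c ∈ Finset.range N,
      urnFlow a (a + b + c) * g (a + 1) b c = ∑ a ∈ Finset.range N, ∑ b ∈ Finset.range N,
        ∑ c ∈ Finset.range N, I a (a + b + c) * g a b c := by
    rw [← sum_shift (fun a => ∑ b ∈ Finset.range N, ∑ c ∈ Finset.range N,
      I a (a + b + c) * g a b c) N (by simp [I]) (by simp [hg])]
    refine Finset.sum_congr rfl fun a _ => Finset.sum_congr rfl fun b _ =>
      Finset.sum_congr rfl fun c _ => ?_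
    rw [← hI]
    push_cast
    ring_nf
  have h2 : ∑ a ∈ Finset.range N, ∑ b ∈ Finset.range N, ∑ c ∈ Finset.range N,
      urnFlow b (a + b + c) * g a (b + 1) c = ∑ a ∈ Finset.range N, ∑ b ∈ Finset.range N,
        ∑ c ∈ Finset.range N, I b (a + b + c) * g a b c := by
    refine Finset.sum_congr rfl fun a _ => ?_
    rw [← sum_shift (fun b => ∑ c ∈ Finset.range N,
      I b (a + b + c) * g a b c) N (by simp [I]) (by simp [hg])]
    refine Finset.sum_congr rfl fun b _ =>
      Finset.sum_congr rfl fun c _ => ?_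
    rw [← hI]
    push_cast
    ring_nf
  have h3 : ∑ a ∈ Finset.range N, ∑ b ∈ Finset.range N, ∑ c ∈ Finset.range N,
      urnFlow c (a + b + c) * g a b (c + 1) = ∑ a ∈ Finset.range N, ∑ b ∈ Finset.range N,
        ∑ c ∈ Finset.range N, I c (a + b + c) * g a b c := by
    refine Finset.sum_congr rfl fun a _ => Finset.sum_congr rfl fun b _ => ?_
    rw [← sum_shift (fun c => I c (a + b + c) * g a b c) N (by simp [I]) (by simp [hg])]
    refine Finset.sum_congr rfl fun c _ => ?_
    rw [← hI]
    push_cast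
    ring_nf
  -- Away from the corner the outgoing mass equals the incoming mass.
  have key : ∀ a b c : ℕ, (urnFlow a (a + b + c) + urnFlow b (a + b + c)
      + urnFlow c (a + b + c)) - (I a (a + b + c) + I b (a + b + c) + I c (a + b + c))
      = if a = 0 then if b = 0 then if c = 0 then 1 else 0 else 0 else 0 := by
    intro a b c
    obtain ⟨n, hn⟩ : ∃ n : ℕ, n = a + b + c := ⟨_, rfl⟩
    have hn' : (a : ℝ) + b + c = n := by rw [hn]; push_cast; ring
    have hc : (c : ℝ) = n - a - b := by linarith
    rcases Nat.eq_zero_or_pos n with h | h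
    · obtain rfl : a = 0 := by omega
      obtain rfl : b = 0 := by omega
      obtain rfl : c = 0 := by omega
      simp [I, urnFlow]
      norm_num
    · have hr : (if a = 0 then if b = 0 then if c = 0 then (1 : ℝ) else 0 else 0 else 0) = 0 := by
        split_ifs <;> first | rfl | omega
      have hnp : (0 : ℝ) < n := by exact_mod_cast h
      rw [hr, hn', hc]
      simp only [I, urnFlow]
      field_simp
      ring
  have h4 : g 0 0 0 = ∑ a ∈ Finset.range N, ∑ b ∈ Finset.range N, ∑ c ∈ Finset.range N,
      ((urnFlow a (a + b + c) + urnFlow b (a + b + c)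
      + urnFlow c (a + b + c)) - (I a (a + b + c) + I b (a + b + c) + I c (a + b + c)))
        * g a b c := by
    simp only [key, ite_mul, zero_mul, one_mul]
    rw [Finset.sum_eq_single_of_mem 0 (by simpa using hpos) (by intro b _ hb; simp [hb]),
      Finset.sum_eq_single_of_mem 0 (by simpa using hpos) (by intro b _ hb; simp [hb]),
      Finset.sum_eq_single_of_mem 0 (by simpa using hpos) (by intro b _ hb; simp [hb])]
    simp
  rw [h4]
  simp only [sub_mul, add_mul, mul_sub, Finset.sum_add_distrib, Finset.sum_sub_distrib, h1, h2, h3]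
  ring

/-- Transience of the octant `ℤ₊³` seen from its corner. -/
lemma octant_bound (g : ℕ → ℕ → ℕ → ℝ) (N : ℕ)
    (hg : ∀ a b c, N ≤ a ∨ N ≤ b ∨ N ≤ c → g a b c = 0) :
    g 0 0 0 ^ 2 ≤ 4 * ∑ p ∈ Finset.range N ×ˢ Finset.range N ×ˢ Finset.range N,
      ((g (p.1 + 1) p.2.1 p.2.2 - g p.1 p.2.1 p.2.2) ^ 2
        + (g p.1 (p.2.1 + 1) p.2.2 - g p.1 p.2.1 p.2.2) ^ 2
        + (g p.1 p.2.1 (p.2.2 + 1) - g p.1 p.2.1 p.2.2) ^ 2) := by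
  rcases Nat.eq_zero_or_pos N with h | hpos
  · simp [hg 0 0 0 (by omega), h]
  have hflow := urn_unit_flow g N hpos hg
  have hen := urn_energy_le N
  simp only [← Finset.sum_product'] at hflow hen
  rw [hflow]
  refine le_trans (Finset.sum_sq_le_sum_mul_sum_of_sq_le_mul _ (fun p _ => ?_) (fun p _ => ?_)
    (fun p _ => ?_)) (mul_le_mul_of_nonneg_right hen (Finset.sum_nonneg fun p _ => ?_))
  · positivity
  · positivity
  · obtain ⟨a, b, c⟩ := p
    simp only
    -- Cauchy-Schwarz in the three directions; the three weights sum to the mass at the vertex.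
    have hw : (2 / (((a : ℝ) + b + c + 1) * (a + b + c + 2)))
        = urnFlow a (a + b + c) + urnFlow b (a + b + c) + urnFlow c (a + b + c) := by
      simp only [urnFlow]
      field_simp
      ring
    rw [hw]
    have p1 : 0 ≤ urnFlow a (a + b + c) := by unfold urnFlow; positivity
    have p2 : 0 ≤ urnFlow b (a + b + c) := by unfold urnFlow; positivity
    have p3 : 0 ≤ urnFlow c (a + b + c) := by unfold urnFlow; positivity
    generalize urnFlow a (a + b + c) = u at *
    generalize urnFlow b (a + b + c) = v at *
    generalize urnFlow c (a + b + c) = w at *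
    generalize g (a + 1) b c = x
    generalize g a (b + 1) c = y
    generalize g a b (c + 1) = z
    generalize g a b c = o
    calc (u * (o - x) + v * (o - y) + w * (o - z)) ^ 2
        ≤ (u ^ 2 + v ^ 2 + w ^ 2) * ((x - o) ^ 2 + (y - o) ^ 2 + (z - o) ^ 2) := by
          nlinarith [sq_nonneg (u * (o - y) - v * (o - x)), sq_nonneg (u * (o - z) - w * (o - x)),
            sq_nonneg (v * (o - z) - w * (o - y))]
      _ ≤ _ := by
          refine mul_le_mul_of_nonneg_right ?_ (by positivity)
          nlinarith [mul_nonneg p1 p2, mul_nonneg p1 p3, mul_nonneg p2 p3]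
  · positivity

/-! ### The octant inside the exclusion network -/

lemma moveTo_injOn {m : ℕ} (v : Fin m → ℤ) : Set.InjOn (moveTo v) {x | okMove v x} := by
  intro x hx y hy h
  funext i
  have h1 := congrFun h i
  have h2 := hx i
  have h3 := hy i
  simp only [moveTo] at h1
  omega

/-- The squared increments of `f` along any family of distinct edges of one type `j` have
total at most twice the Dirichlet form. -/
lemma sum_edges_le {m : ℕ} {f : (Fin m → ℕ) → ℝ} (hf : (Function.support f).Finite)
    {β : Type*} (B : Finset β) (κ : β → Fin m → ℕ) (hκ : Function.Injective κ) (j : Fin (m + 1))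
    (hok : ∀ b, okMove (stepVec m j) (κ b)) :
    ∑ b ∈ B, (f (moveTo (stepVec m j) (κ b)) - f (κ b)) ^ 2 ≤ 2 * exclDirichlet m f := by
  classical
  let T : Fin (m + 1) → ℤ → (Fin m → ℕ) → ℝ := fun j ε y =>
    if okMove (ε • stepVec m j) y then (f (moveTo (ε • stepVec m j) y) - f y) ^ 2 else 0
  have hT : ∀ j ε y, 0 ≤ T j ε y := by
    intro j ε y
    simp only [T]
    split_ifs <;> positivity
  have hTfin : ∀ j ε, (Function.support (T j ε)).Finite := by
    intro j ε
    have hpre := hf.preimage' (f := fun x : {x // okMove (ε • stepVec m j) x} =>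
      moveTo (ε • stepVec m j) x.1) (fun b _ => by
        refine Set.Subsingleton.finite fun x hx y hy => ?_
        exact Subtype.ext (moveTo_injOn _ x.2 y.2 (hx.trans hy.symm)))
    refine (hf.union (hpre.image Subtype.val)).subset fun x hx => ?_
    by_contra hcon
    simp only [Set.mem_union, not_or] at hcon
    apply hx
    simp only [T]
    split_ifs with hok
    · have h1 : f x = 0 := by simpa using hcon.1
      have h2 : f (moveTo (ε • stepVec m j) x) = 0 := by
        by_contra h
        exact hcon.2 ⟨⟨x, hok⟩, h, rfl⟩
      rw [h1, h2]
      norm_num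
    · rfl
  have hsum : (Function.support fun y => ∑ j, ∑ ε ∈ ({1, -1} : Finset ℤ), T j ε y).Finite := by
    refine (Set.finite_iUnion fun j => (hTfin j 1).union (hTfin j (-1))).subset fun x hx => ?_
    by_contra hcon
    simp only [Set.mem_iUnion, Set.mem_union, not_exists, not_or, Function.mem_support,
      not_not] at hcon
    apply hx
    exact Finset.sum_eq_zero fun j _ => by simp [hcon j]
  have hE : 2 * exclDirichlet m f = ∑ᶠ y, ∑ j, ∑ ε ∈ ({1, -1} : Finset ℤ), T j ε y := by
    unfold exclDirichlet
    ring
  rw [hE, finsum_eq_sum_of_support_subset (s := hsum.toFinset ∪ B.image κ) _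
    (by intro x hx; simp only [Finset.coe_union, Set.Finite.coe_toFinset]; exact Or.inl hx)]
  calc ∑ b ∈ B, (f (moveTo (stepVec m j) (κ b)) - f (κ b)) ^ 2
      = ∑ b ∈ B, T j 1 (κ b) := by
        refine Finset.sum_congr rfl fun b _ => ?_
        simp only [T, one_smul, if_pos (hok b)]
    _ = ∑ y ∈ B.image κ, T j 1 y := (Finset.sum_image fun x _ y _ h => hκ h).symm
    _ ≤ ∑ y ∈ hsum.toFinset ∪ B.image κ, T j 1 y :=
        Finset.sum_le_sum_of_subset_of_nonneg Finset.subset_union_right fun y _ _ => hT j 1 y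
    _ ≤ _ := by
        refine Finset.sum_le_sum fun y _ => ?_
        refine le_trans ?_ (Finset.single_le_sum
          (f := fun j => ∑ ε ∈ ({1, -1} : Finset ℤ), T j ε y)
          (fun j _ => Finset.sum_nonneg fun ε _ => hT j ε y) (Finset.mem_univ j))
        exact Finset.single_le_sum (f := fun ε => T j ε y) (fun ε _ => hT j ε y) (by simp)

/-- The point obtained from `y` by adding `a`, `b`, `c` to its first three coordinates. -/
def shift {m : ℕ} (y : Fin m → ℕ) (a b c : ℕ) : Fin m → ℕ := fun i =>
  y i + (if (i : ℕ) = 0 then a else 0) + (if (i : ℕ) = 1 then b else 0)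
    + (if (i : ℕ) = 2 then c else 0)

lemma shift_inj {m : ℕ} (hm : 3 ≤ m) (y : Fin m → ℕ) {a b c a' b' c' : ℕ}
    (h : shift y a b c = shift y a' b' c') : a = a' ∧ b = b' ∧ c = c' := by
  have h0 := congrFun h ⟨0, by omega⟩
  have h1 := congrFun h ⟨1, by omega⟩
  have h2 := congrFun h ⟨2, by omega⟩
  simp [shift] at h0 h1 h2
  exact ⟨h0, h1, h2⟩

/-- **Pointwise harmonic estimate, `n ≥ 4`, `d = 1` case:** there is a universal `C`
such that `f(y)² ≤ C 𝓔_m(f)` for all `m ≥ 3`, all finitely supported `f : ℤ₊^m → ℝ`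
and all `y`. -/
theorem pointwise_harmonic_estimate_dim_ge_three :
    ∃ C : ℝ, ∀ m : ℕ, 3 ≤ m → ∀ f : (Fin m → ℕ) → ℝ, (Function.support f).Finite →
      ∀ y : Fin m → ℕ, (f y) ^ 2 ≤ C * exclDirichlet m f := by
  refine ⟨112, fun m hm f hf y => ?_⟩
  let g : ℕ → ℕ → ℕ → ℝ := fun a b c => f (shift y a b c)
  obtain ⟨N, hN⟩ : ∃ N, ∀ a b c, N ≤ a ∨ N ≤ b ∨ N ≤ c → g a b c = 0 := by
    have hfin : (Function.support fun p : ℕ × ℕ × ℕ => g p.1 p.2.1 p.2.2).Finite :=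
      hf.preimage (f := fun p : ℕ × ℕ × ℕ => shift y p.1 p.2.1 p.2.2) (by
        rintro ⟨a, b, c⟩ _ ⟨a', b', c'⟩ _ h
        obtain ⟨rfl, rfl, rfl⟩ := shift_inj hm y h
        rfl)
    obtain ⟨⟨A, B, C⟩, hM⟩ := hfin.bddAbove
    refine ⟨A + B + C + 1, fun a b c h => ?_⟩
    by_contra hne
    have hle : (a, b, c) ≤ (A, B, C) := hM (show (a, b, c) ∈ Function.support _ from hne)
    obtain ⟨h1, h2, h3⟩ : a ≤ A ∧ b ≤ B ∧ c ≤ C := hle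
    omega
  have hoct := octant_bound g N hN
  have hg0 : g 0 0 0 = f y := congrArg f (by funext i; simp [shift])
  rw [hg0] at hoct
  set S := Finset.range N ×ˢ Finset.range N ×ˢ Finset.range N
  -- Edges of types `0`, `1`, `2`, based at `z`, `z + e₁`, `z + e₂`: they join consecutive points
  -- of the path `z, z + e₁, z + e₂, z + e₃`.
  have E0 : ∑ p ∈ S, (g (p.1 + 1) p.2.1 p.2.2 - g p.1 p.2.1 p.2.2) ^ 2
      ≤ 2 * exclDirichlet m f := by
    have hstep : ∀ p : ℕ × ℕ × ℕ, (∀ i, ((shift y p.1 p.2.1 p.2.2 i : ℕ) : ℤ)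
        + stepVec m ⟨0, by omega⟩ i = (shift y (p.1 + 1) p.2.1 p.2.2 i : ℕ)) := by
      intro p i
      simp only [shift, stepVec]
      split_ifs <;> push_cast <;> first | contradiction | omega
    convert sum_edges_le hf S (fun p => shift y p.1 p.2.1 p.2.2) ?_ ⟨0, by omega⟩ ?_ using 4
    · simp only [g]
      congr 1
      funext i
      simp only [moveTo, hstep, Int.toNat_natCast]
    · rintro ⟨a, b, c⟩ ⟨a', b', c'⟩ h
      obtain ⟨h1, h2, h3⟩ := shift_inj hm y h
      simp_all
    · intro p i
      rw [hstep]
      positivity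
  have E1 : ∑ p ∈ S, (g p.1 (p.2.1 + 1) p.2.2 - g (p.1 + 1) p.2.1 p.2.2) ^ 2
      ≤ 2 * exclDirichlet m f := by
    have hstep : ∀ p : ℕ × ℕ × ℕ, (∀ i, ((shift y (p.1 + 1) p.2.1 p.2.2 i : ℕ) : ℤ)
        + stepVec m ⟨1, by omega⟩ i = (shift y p.1 (p.2.1 + 1) p.2.2 i : ℕ)) := by
      intro p i
      simp only [shift, stepVec]
      split_ifs <;> push_cast <;> omega
    convert sum_edges_le hf S (fun p => shift y (p.1 + 1) p.2.1 p.2.2) ?_ ⟨1, by omega⟩ ?_ using 4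
    · simp only [g]
      congr 1
      funext i
      simp only [moveTo, hstep, Int.toNat_natCast]
    · rintro ⟨a, b, c⟩ ⟨a', b', c'⟩ h
      obtain ⟨h1, h2, h3⟩ := shift_inj hm y h
      simp_all
    · intro p i
      rw [hstep]
      positivity
  have E2 : ∑ p ∈ S, (g p.1 p.2.1 (p.2.2 + 1) - g p.1 (p.2.1 + 1) p.2.2) ^ 2
      ≤ 2 * exclDirichlet m f := by
    have hstep : ∀ p : ℕ × ℕ × ℕ, (∀ i, ((shift y p.1 (p.2.1 + 1) p.2.2 i : ℕ) : ℤ)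
        + stepVec m ⟨2, by omega⟩ i = (shift y p.1 p.2.1 (p.2.2 + 1) i : ℕ)) := by
      intro p i
      simp only [shift, stepVec]
      split_ifs <;> push_cast <;> omega
    convert sum_edges_le hf S (fun p => shift y p.1 (p.2.1 + 1) p.2.2) ?_ ⟨2, by omega⟩ ?_ using 4
    · simp only [g]
      congr 1
      funext i
      simp only [moveTo, hstep, Int.toNat_natCast]
    · rintro ⟨a, b, c⟩ ⟨a', b', c'⟩ h
      obtain ⟨h1, h2, h3⟩ := shift_inj hm y h
      simp_all
    · intro p i
      rw [hstep]
      positivity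
  -- `(α + β)² ≤ 2α² + 2β²` and `(α + β + γ)² ≤ 3α² + 3β² + 3γ²` give the weights
  -- `1 + 2 + 3`, `2 + 3` and `3`; then `112 = 4 * (6 + 5 + 3) * 2`.
  have hcmp : ∑ p ∈ S, ((g (p.1 + 1) p.2.1 p.2.2 - g p.1 p.2.1 p.2.2) ^ 2
        + (g p.1 (p.2.1 + 1) p.2.2 - g p.1 p.2.1 p.2.2) ^ 2
        + (g p.1 p.2.1 (p.2.2 + 1) - g p.1 p.2.1 p.2.2) ^ 2)
      ≤ ∑ p ∈ S, (6 * (g (p.1 + 1) p.2.1 p.2.2 - g p.1 p.2.1 p.2.2) ^ 2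
        + 5 * (g p.1 (p.2.1 + 1) p.2.2 - g (p.1 + 1) p.2.1 p.2.2) ^ 2
        + 3 * (g p.1 p.2.1 (p.2.2 + 1) - g p.1 (p.2.1 + 1) p.2.2) ^ 2) := by
    refine Finset.sum_le_sum fun p _ => ?_
    generalize g (p.1 + 1) p.2.1 p.2.2 = u
    generalize g p.1 (p.2.1 + 1) p.2.2 = v
    generalize g p.1 p.2.1 (p.2.2 + 1) = w
    generalize g p.1 p.2.1 p.2.2 = o
    nlinarith [sq_nonneg ((u - o) - (v - u)), sq_nonneg ((u - o) - (w - v)),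
      sq_nonneg ((v - u) - (w - v))]
  simp only [Finset.sum_add_distrib, ← Finset.mul_sum] at hcmp hoct
  linarith
end

section
/- There exists a constant C < ∞ such that for every λ ∈ (0, 1/2), every finitely supported function f : ℤ₊² → ℝ and every point y ∈ ℤ₊², one has f(y)² ≤ C · log(1/λ) · ( λ · Σ_{z ∈ ℤ₊²} f(z)² + 𝓔₂(f) ). -/
open Finset

/-- The average of `g` over the antidiagonal `{(a, b) : a + b = k}`. -/
noncomputable def antidiagAvg (g : ℕ × ℕ → ℝ) (k : ℕ) : ℝ :=
  (∑ p ∈ antidiagonal k, g p) / (k + 1)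

/-- The sum of squared increments of `g` along the two edges leaving `p` in the positive
coordinate directions. -/
def outEnergy (g : ℕ × ℕ → ℝ) (p : ℕ × ℕ) : ℝ :=
  (g (p.1 + 1, p.2) - g p) ^ 2 + (g (p.1, p.2 + 1) - g p) ^ 2

lemma outEnergy_nonneg (g : ℕ × ℕ → ℝ) (p : ℕ × ℕ) : 0 ≤ outEnergy g p := by
  unfold outEnergy; positivity

/-- Every point of level `k + 1` is reached from level `k` with total weight `k + 1`. -/
lemma succ_mul_sum_antidiagonal_succ (g : ℕ × ℕ → ℝ) (k : ℕ) :
    ((k : ℝ) + 1) * ∑ p ∈ antidiagonal (k + 1), g p =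
      ∑ p ∈ antidiagonal k,
        (((p.1 : ℝ) + 1) * g (p.1 + 1, p.2) + ((p.2 : ℝ) + 1) * g (p.1, p.2 + 1)) := by
  have h : ((k : ℝ) + 1) * ∑ p ∈ antidiagonal (k + 1), g p =
      ∑ p ∈ antidiagonal (k + 1), (p.1 : ℝ) * g p
        + ∑ p ∈ antidiagonal (k + 1), (p.2 : ℝ) * g p := by
    rw [mul_sum, ← sum_add_distrib]
    refine sum_congr rfl fun p hp => ?_
    have : (p.1 : ℝ) + p.2 = k + 1 := by exact_mod_cast mem_antidiagonal.1 hp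
    rw [← this]; ring
  rw [h, sum_add_distrib, Nat.sum_antidiagonal_succ, Nat.sum_antidiagonal_succ']
  simp

/-- The increment of the averages is the flow of the gradient of `g`. -/
lemma antidiagAvg_succ_sub (g : ℕ × ℕ → ℝ) (k : ℕ) :
    antidiagAvg g (k + 1) - antidiagAvg g k =
      (∑ p ∈ antidiagonal k, (((p.1 : ℝ) + 1) * (g (p.1 + 1, p.2) - g p)
        + ((p.2 : ℝ) + 1) * (g (p.1, p.2 + 1) - g p))) / (((k : ℝ) + 1) * (k + 2)) := by
  have h : ∑ p ∈ antidiagonal k, (((p.1 : ℝ) + 1) * (g (p.1 + 1, p.2) - g p)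
        + ((p.2 : ℝ) + 1) * (g (p.1, p.2 + 1) - g p)) =
      ((k : ℝ) + 1) * ∑ p ∈ antidiagonal (k + 1), g p
        - ((k : ℝ) + 2) * ∑ p ∈ antidiagonal k, g p := by
    rw [succ_mul_sum_antidiagonal_succ, mul_sum, ← sum_sub_distrib]
    refine sum_congr rfl fun p hp => ?_
    have : (p.1 : ℝ) + p.2 = k := by exact_mod_cast mem_antidiagonal.1 hp
    rw [← this]; ring
  rw [h]
  unfold antidiagAvg
  push_cast
  have h1 : (k : ℝ) + 1 ≠ 0 := by positivity
  have h2 : (k : ℝ) + 2 ≠ 0 := by positivity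
  have h3 : (k : ℝ) + 1 + 1 ≠ 0 := by positivity
  field_simp
  ring

lemma sq_antidiagAvg_succ_sub_le (g : ℕ × ℕ → ℝ) (k : ℕ) :
    (antidiagAvg g (k + 1) - antidiagAvg g k) ^ 2 ≤
      1 / ((k : ℝ) + 2) * ∑ p ∈ antidiagonal k, outEnergy g p := by
  rw [antidiagAvg_succ_sub, div_pow, div_le_iff₀ (by positivity)]
  refine (sq_sum_le_card_mul_sum_sq).trans ?_
  rw [Nat.card_antidiagonal]
  have h : ∀ p ∈ antidiagonal k, (((p.1 : ℝ) + 1) * (g (p.1 + 1, p.2) - g p)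
        + ((p.2 : ℝ) + 1) * (g (p.1, p.2 + 1) - g p)) ^ 2 ≤
      ((k : ℝ) + 1) * (k + 2) * outEnergy g p := by
    intro p hp
    have hk : (p.1 : ℝ) + p.2 = k := by exact_mod_cast mem_antidiagonal.1 hp
    unfold outEnergy
    generalize g (p.1 + 1, p.2) - g p = u
    generalize g (p.1, p.2 + 1) - g p = v
    have ha : (0 : ℝ) ≤ p.1 := by positivity
    have hb : (0 : ℝ) ≤ p.2 := by positivity
    rw [← hk]
    generalize (p.1 : ℝ) = a at *
    generalize (p.2 : ℝ) = b at *
    calc ((a + 1) * u + (b + 1) * v) ^ 2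
        = (a + b + 2) * ((a + 1) * u ^ 2 + (b + 1) * v ^ 2)
            - (a + 1) * (b + 1) * (u - v) ^ 2 := by ring
      _ ≤ (a + b + 2) * ((a + 1) * u ^ 2 + (b + 1) * v ^ 2) := by
          have : 0 ≤ (a + 1) * (b + 1) * (u - v) ^ 2 := by positivity
          linarith
      _ ≤ (a + b + 2) * ((a + b + 1) * u ^ 2 + (a + b + 1) * v ^ 2) := by
          gcongr <;> linarith
      _ = _ := by ring
  have h' := sum_le_sum h
  rw [← mul_sum] at h'
  calc _ ≤ ((k + 1 : ℕ) : ℝ) * (((k : ℝ) + 1) * (k + 2) *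
        ∑ p ∈ antidiagonal k, outEnergy g p) := by gcongr
    _ = _ := by
      push_cast
      have h2 : (k : ℝ) + 2 ≠ 0 := by positivity
      field_simp

lemma sum_range_one_div_add_two_le_log (N : ℕ) :
    ∑ k ∈ range N, 1 / ((k : ℝ) + 2) ≤ Real.log (N + 1) := by
  induction N with
  | zero => simp
  | succ n ih =>
    rw [sum_range_succ]
    have h1 : (0 : ℝ) < n + 1 := by positivity
    have h2 : (0 : ℝ) < n + 2 := by positivity
    -- `log (1 / x) ≥ 1 - x` at `x = (n + 1) / (n + 2)`
    have h := Real.log_le_sub_one_of_pos (div_pos h1 h2)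
    rw [Real.log_div h1.ne' h2.ne'] at h
    have e : ((n : ℝ) + 1) / (n + 2) - 1 = - (1 / (n + 2)) := by field_simp; ring
    have e' : (((n + 1 : ℕ) : ℝ) + 1) = n + 2 := by push_cast; ring
    rw [e']
    linarith

lemma sq_antidiagAvg_sub_zero_le (g : ℕ × ℕ → ℝ) {n N : ℕ} (hn : n ≤ N) :
    (antidiagAvg g n - antidiagAvg g 0) ^ 2 ≤
      Real.log (N + 1) * ∑ k ∈ range N, ∑ p ∈ antidiagonal k, outEnergy g p := by
  rw [← sum_range_sub (antidiagAvg g)]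
  have hE : ∀ k, 0 ≤ ∑ p ∈ antidiagonal k, outEnergy g p :=
    fun k => sum_nonneg fun p _ => outEnergy_nonneg g p
  have hsub : range n ⊆ range N := range_subset_range.2 hn
  refine (sum_sq_le_sum_mul_sum_of_sq_le_mul (range n) (f := fun k : ℕ => 1 / ((k : ℝ) + 2))
    (g := fun k => ∑ p ∈ antidiagonal k, outEnergy g p) (fun k _ => by positivity)
    (fun k _ => hE k) (fun k _ => sq_antidiagAvg_succ_sub_le g k)).trans ?_
  refine mul_le_mul ?_ ?_ (sum_nonneg fun k _ => hE k) (Real.log_nonneg (by simp))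
  · exact (sum_le_sum_of_subset_of_nonneg hsub fun k _ _ => by positivity).trans
      (sum_range_one_div_add_two_le_log N)
  · exact sum_le_sum_of_subset_of_nonneg hsub fun k _ _ => hE k

lemma sq_antidiagAvg_le (g : ℕ × ℕ → ℝ) (n : ℕ) :
    antidiagAvg g n ^ 2 ≤ ∑ p ∈ antidiagonal n, g p ^ 2 := by
  unfold antidiagAvg
  rw [div_pow, div_le_iff₀ (by positivity)]
  refine (sq_sum_le_card_mul_sum_sq).trans ?_
  rw [Nat.card_antidiagonal, mul_comm]
  have : 0 ≤ ∑ p ∈ antidiagonal n, g p ^ 2 := sum_nonneg fun p _ => sq_nonneg _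
  gcongr
  push_cast
  nlinarith [(Nat.cast_nonneg n : (0 : ℝ) ≤ n)]

lemma sq_apply_zero_le (g : ℕ × ℕ → ℝ) (N : ℕ) :
    N * g (0, 0) ^ 2 ≤ 2 * ∑ k ∈ range N, ∑ p ∈ antidiagonal k, g p ^ 2
      + N * (2 * (Real.log (N + 1) *
          ∑ k ∈ range N, ∑ p ∈ antidiagonal k, outEnergy g p)) := by
  have h0 : antidiagAvg g 0 = g (0, 0) := by simp [antidiagAvg]
  have h : ∀ n ∈ range N, g (0, 0) ^ 2 ≤ 2 * ∑ p ∈ antidiagonal n, g p ^ 2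
      + 2 * (Real.log (N + 1) *
          ∑ k ∈ range N, ∑ p ∈ antidiagonal k, outEnergy g p) := by
    intro n hn
    have h1 := sq_antidiagAvg_sub_zero_le g (mem_range.1 hn).le
    have h2 := sq_antidiagAvg_le g n
    rw [h0] at h1
    nlinarith [sq_nonneg (2 * antidiagAvg g n - g (0, 0))]
  have h' := sum_le_sum h
  rw [sum_add_distrib, ← mul_sum, sum_const, sum_const, card_range, nsmul_eq_mul,
    nsmul_eq_mul] at h'
  exact h'

/-- The quadrant `y + ℤ₊²`, sliced into antidiagonals, contributes at most the full sum. -/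
lemma sum_antidiagonal_le_finsum (h : (Fin 2 → ℕ) → ℝ) (h0 : ∀ z, 0 ≤ h z)
    (hf : (Function.support h).Finite) (y : Fin 2 → ℕ) (N : ℕ) :
    ∑ k ∈ range N, ∑ p ∈ antidiagonal k, h ![y 0 + p.1, y 1 + p.2] ≤ ∑ᶠ z, h z := by
  classical
  rw [sum_sigma']
  have hinj : Set.InjOn (fun s : Σ _ : ℕ, ℕ × ℕ => ![y 0 + s.2.1, y 1 + s.2.2])
      ((range N).sigma fun k => antidiagonal k : Finset (Σ _ : ℕ, ℕ × ℕ)) := by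
    rintro ⟨k, a, b⟩ hs ⟨l, c, d⟩ ht e
    simp only [coe_sigma, Set.mem_sigma_iff, mem_coe, HasAntidiagonal.mem_antidiagonal] at hs ht
    have e0 : y 0 + a = y 0 + c := congrFun e 0
    have e1 : y 1 + b = y 1 + d := congrFun e 1
    obtain rfl : a = c := by omega
    obtain rfl : b = d := by omega
    obtain rfl : k = l := by omega
    rfl
  rw [← sum_image (f := h) hinj]
  rw [finsum_eq_sum_of_support_subset (s := hf.toFinset ∪ image
    (fun s : Σ _ : ℕ, ℕ × ℕ => ![y 0 + s.2.1, y 1 + s.2.2])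
    ((range N).sigma fun k => antidiagonal k)) h (fun z hz => by simp [Function.mem_support.1 hz])]
  exact sum_le_sum_of_subset_of_nonneg subset_union_right fun z _ _ => h0 z

/-- The contribution of the moves out of `y` to `2 𝓔_m(f)`. -/
noncomputable def exclDensity (m : ℕ) (f : (Fin m → ℕ) → ℝ) (y : Fin m → ℕ) : ℝ :=
  ∑ j : Fin (m + 1), ∑ ε ∈ ({1, -1} : Finset ℤ),
    (if okMove (ε • stepVec m j) y then (f (moveTo (ε • stepVec m j) y) - f y) ^ 2 else 0)

lemma exclDensity_nonneg (m : ℕ) (f : (Fin m → ℕ) → ℝ) (y : Fin m → ℕ) :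
    0 ≤ exclDensity m f y :=
  sum_nonneg fun j _ => sum_nonneg fun ε _ => by split_ifs <;> positivity

/-- Moves change each coordinate by at most one, so the density vanishes outside a box slightly
larger than one containing the support of `f`. -/
lemma finite_support_exclDensity (m : ℕ) (f : (Fin m → ℕ) → ℝ)
    (hf : (Function.support f).Finite) : (Function.support (exclDensity m f)).Finite := by
  obtain ⟨M, hM⟩ := hf.bddAbove
  refine (Set.finite_Iic (M + 1)).subset fun y hy => ?_
  by_contra hc
  obtain ⟨i, hi⟩ : ∃ i, M i + 1 < y i := by
    simpa [Pi.le_def] using hc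
  have hz : ∀ z : Fin m → ℕ, M i < z i → f z = 0 := by
    intro z hz
    by_contra h
    have : z i ≤ M i := hM (Function.mem_support.2 h) i
    omega
  refine hy (sum_eq_zero fun j _ => sum_eq_zero fun ε hε => ?_)
  have h1 : M i < moveTo (ε • stepVec m j) y i := by
    have : -1 ≤ (ε • stepVec m j) i := by
      simp only [mem_insert, mem_singleton] at hε
      simp only [Pi.smul_apply, stepVec, smul_eq_mul]
      rcases hε with rfl | rfl <;> split_ifs <;> simp
    simp only [moveTo]
    omega
  rw [hz _ h1, hz y (by omega)]
  simp

/-- The moves `e₁` and `e₂` (the latter encoded as `(-1) • stepVec 2 2`) are always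
allowed, and the other moves only add energy. -/
lemma outEnergy_le_exclDensity (f : (Fin 2 → ℕ) → ℝ) (y : Fin 2 → ℕ) (p : ℕ × ℕ) :
    outEnergy (fun q => f ![y 0 + q.1, y 1 + q.2]) p ≤
      exclDensity 2 f ![y 0 + p.1, y 1 + p.2] := by
  set z : Fin 2 → ℕ := ![y 0 + p.1, y 1 + p.2] with hzdef
  have hok1 : okMove ((1 : ℤ) • stepVec 2 0) z := by
    intro i; fin_cases i <;> simp [stepVec] <;> positivity
  have hok2 : okMove ((-1 : ℤ) • stepVec 2 2) z := by
    intro i; fin_cases i <;> simp [stepVec] <;> positivity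
  have hm1 : moveTo ((1 : ℤ) • stepVec 2 0) z = ![y 0 + (p.1 + 1), y 1 + p.2] := by
    ext i; fin_cases i <;> simp [moveTo, stepVec, hzdef] <;> omega
  have hm2 : moveTo ((-1 : ℤ) • stepVec 2 2) z = ![y 0 + p.1, y 1 + (p.2 + 1)] := by
    ext i; fin_cases i <;> simp [moveTo, stepVec, hzdef] <;> omega
  have hite : ∀ v : Fin 2 → ℤ,
      0 ≤ if okMove v z then (f (moveTo v z) - f z) ^ 2 else 0 := by
    intro v; split_ifs <;> positivity
  have hne : (1 : ℤ) ≠ -1 := by decide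
  unfold exclDensity outEnergy
  rw [Fin.sum_univ_three, sum_pair hne, sum_pair hne, sum_pair hne, if_pos hok1, if_pos hok2,
    hm1, hm2]
  have a1 := hite ((-1 : ℤ) • stepVec 2 0)
  have a2 := hite ((1 : ℤ) • stepVec 2 1)
  have a3 := hite ((-1 : ℤ) • stepVec 2 1)
  have a4 := hite ((1 : ℤ) • stepVec 2 2)
  simp only [← hzdef]
  linarith

/-- **Pointwise harmonic estimate, `n = 3`, `d = 1` case (logarithmic blowup):**
`f(y)² ≤ C log(1/λ) (λ‖f‖² + 𝓔₂(f))` for finitely supported `f : ℤ₊² → ℝ`. -/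
theorem pointwise_harmonic_estimate_two_gaps :
    ∃ C : ℝ, ∀ lam : ℝ, lam ∈ Set.Ioo (0 : ℝ) (1 / 2) →
      ∀ f : (Fin 2 → ℕ) → ℝ, (Function.support f).Finite →
        ∀ y : Fin 2 → ℕ,
          (f y) ^ 2 ≤ C * Real.log (1 / lam) *
            (lam * ∑ᶠ z : Fin 2 → ℕ, (f z) ^ 2 + exclDirichlet 2 f) := by
  refine ⟨8, fun lam ⟨hl0, hl1⟩ f hf y => ?_⟩
  set S := ∑ᶠ z : Fin 2 → ℕ, (f z) ^ 2 with hS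
  have hD : exclDirichlet 2 f = (1 / 2) * ∑ᶠ z, exclDensity 2 f z := rfl
  have hsq : (Function.support fun z => f z ^ 2).Finite := by
    refine hf.subset fun z hz => ?_
    simpa using hz
  have hS0 : 0 ≤ S := finsum_nonneg fun z => sq_nonneg _
  have hD0 : 0 ≤ ∑ᶠ z, exclDensity 2 f z := finsum_nonneg fun z => exclDensity_nonneg 2 f z
  set x := 1 / lam with hx
  have hx2 : 2 < x := by rw [hx, lt_div_iff₀ hl0]; linarith
  have hlx : lam * x = 1 := by rw [hx]; field_simp
  set N := ⌈x⌉₊ with hN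
  have hxN : x ≤ N := Nat.le_ceil x
  have hNx : (N : ℝ) < x + 1 := Nat.ceil_lt_add_one (by linarith)
  have hN0 : (0 : ℝ) < N := by linarith
  have hlog : Real.log (N + 1) ≤ 2 * Real.log x := by
    have h : Real.log (N + 1) ≤ Real.log (x ^ 2) :=
      Real.log_le_log (by linarith) (by nlinarith)
    rw [Real.log_pow] at h
    exact_mod_cast h
  have hlogx : 1 / 2 ≤ Real.log x := by
    have h := Real.log_le_log (by norm_num) hx2.le
    have := Real.log_two_gt_d9
    linarith
  have key := sq_apply_zero_le (fun q => f ![y 0 + q.1, y 1 + q.2]) N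
  have hy : ![y 0 + 0, y 1 + 0] = y := by
    ext i; fin_cases i <;> rfl
  simp only [hy] at key
  have b1 := sum_antidiagonal_le_finsum (fun z => f z ^ 2) (fun z => sq_nonneg _) hsq y N
  have b2 := (sum_le_sum fun k _ => sum_le_sum fun p _ => outEnergy_le_exclDensity f y p).trans
    (sum_antidiagonal_le_finsum (exclDensity 2 f) (exclDensity_nonneg 2 f)
      (finite_support_exclDensity 2 f hf) y N)
  have b3 : Real.log (N + 1) * ∑ k ∈ range N, ∑ p ∈ antidiagonal k,
      outEnergy (fun q => f ![y 0 + q.1, y 1 + q.2]) p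
        ≤ 2 * Real.log x * ∑ᶠ z, exclDensity 2 f z :=
    mul_le_mul hlog b2 (sum_nonneg fun k _ => sum_nonneg fun p _ => outEnergy_nonneg _ p)
      (by linarith)
  have hlN : 1 ≤ lam * N := by
    rw [← hlx]; gcongr
  have h1 : N * f y ^ 2 ≤
      N * (2 * (lam * S) + 2 * (2 * Real.log x * ∑ᶠ z, exclDensity 2 f z)) := by
    have c1 : S ≤ lam * N * S := le_mul_of_one_le_left hS0 hlN
    have c2 := mul_le_mul_of_nonneg_left b3 hN0.le
    linarith
  have h2 := le_of_mul_le_mul_left h1 hN0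
  have h3 : 1 / 2 * (lam * S) ≤ Real.log x * (lam * S) := by gcongr
  have h4 : 0 ≤ lam * S := by positivity
  rw [hD]
  linarith
end

section
/- There exists a constant C < ∞ such that for every λ ∈ (0, 1/2), every finitely supported function f : ℤ² → ℝ and every point y ∈ ℤ², one has f(y)² ≤ C · log(1/λ) · ( λ · Σ_{x ∈ ℤ²} f(x)² + 𝓓₂(f) ). -/
/-!
The proof averages `f` over the diagonals of a quadrant with corner `y`.  Write `g a b = f (y + (a, b))`
and let `A n` be the mean of `g` over the `n + 1` points with `a + b = n`, so that `A 0 = f y`.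
The flow which sends mass `(a + 1) / ((n + 1) (n + 2))` from `(a, b)` to `(a + 1, b)` and
`(b + 1) / ((n + 1) (n + 2))` to `(a, b + 1)` (the transitions of Pólya's urn) carries the uniform
distribution on diagonal `n` to that on diagonal `n + 1`.  Hence `A n - A (n + 1)` is the pairing of
this flow with the gradient of `g`, and Cauchy–Schwarz gives `(A n - A (n + 1))² ≤ G n / (n + 1)`,
where `G n` is the Dirichlet energy on diagonal `n` (`diagAvg_sub_sq_le`).

Summing over `n < N` by Cauchy–Schwarz, `(A 0 - A N)² ≤ H_N · 𝓓(f)` with `H_N` the harmonic number, which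
is the source of the logarithm.  Jensen's inequality gives `(N + 1) (A N)² ≤ ∑_{a + b = N} g²`; so
averaging `(A 0)² ≤ 2 (A N)² + 2 H_N 𝓓(f)` over `N < M` with weights `N + 1` bounds
`(f y)²` by a constant times `M⁻² ‖f‖² + H_M 𝓓(f)` (`quadrant_estimate`).  For `M = ⌈1/λ⌉` one has
`M⁻² ≤ λ` and `H_M ≤ 1 + log M ≤ 4 log (1/λ)`.
-/

open Finset

/-- The mean of `g` over the `n + 1` points `(a, b) ∈ ℕ²` with `a + b = n`. -/
noncomputable def diagAvg (g : ℕ → ℕ → ℝ) (n : ℕ) : ℝ :=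
  (∑ p ∈ antidiagonal n, g p.1 p.2) / (n + 1)

/-- The Dirichlet energy of `g` on the edges leading from the diagonal `a + b = n` to the next one. -/
noncomputable def diagEnergy (g : ℕ → ℕ → ℝ) (n : ℕ) : ℝ :=
  ∑ p ∈ antidiagonal n,
    ((g (p.1 + 1) p.2 - g p.1 p.2) ^ 2 + (g p.1 (p.2 + 1) - g p.1 p.2) ^ 2)

/-- Conservation of mass for the urn flow between consecutive diagonals, cleared of denominators. -/
lemma diag_flow_identity (g : ℕ → ℕ → ℝ) (n : ℕ) :
    ∑ p ∈ antidiagonal n, (((p.1 : ℝ) + 1) * (g (p.1 + 1) p.2 - g p.1 p.2)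
        + ((p.2 : ℝ) + 1) * (g p.1 (p.2 + 1) - g p.1 p.2))
      = (n + 1) * ∑ p ∈ antidiagonal (n + 1), g p.1 p.2
        - (n + 2) * ∑ p ∈ antidiagonal n, g p.1 p.2 := by
  have h1 := Finset.Nat.sum_antidiagonal_succ (n := n)
    (f := fun p : ℕ × ℕ => (p.1 : ℝ) * g p.1 p.2)
  have h2 := Finset.Nat.sum_antidiagonal_succ' (n := n)
    (f := fun p : ℕ × ℕ => (p.2 : ℝ) * g p.1 p.2)
  have h3 : ((n : ℝ) + 1) * ∑ p ∈ antidiagonal (n + 1), g p.1 p.2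
      = ∑ p ∈ antidiagonal (n + 1), (p.1 : ℝ) * g p.1 p.2
        + ∑ p ∈ antidiagonal (n + 1), (p.2 : ℝ) * g p.1 p.2 := by
    rw [mul_sum, ← sum_add_distrib]
    refine sum_congr rfl fun p hp => ?_
    have : (p.1 : ℝ) + p.2 = n + 1 := by exact_mod_cast mem_antidiagonal.1 hp
    rw [← this]; ring
  rw [h3, h1, h2, mul_sum]
  simp only [Nat.cast_zero, zero_mul, zero_add, Nat.cast_add, Nat.cast_one]
  rw [← sum_add_distrib, ← sum_sub_distrib]
  refine sum_congr rfl fun p hp => ?_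
  have : (p.1 : ℝ) + p.2 = n := by exact_mod_cast mem_antidiagonal.1 hp
  rw [← this]; ring

lemma diagAvg_sub_sq_le (g : ℕ → ℕ → ℝ) (n : ℕ) :
    (diagAvg g (n + 1) - diagAvg g n) ^ 2 ≤ 1 / ((n : ℝ) + 1) * diagEnergy g n := by
  have hn : (0 : ℝ) ≤ n := n.cast_nonneg
  have hid := diag_flow_identity g n
  set T := ∑ p ∈ antidiagonal n, (((p.1 : ℝ) + 1) * (g (p.1 + 1) p.2 - g p.1 p.2)
        + ((p.2 : ℝ) + 1) * (g p.1 (p.2 + 1) - g p.1 p.2)) with hT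
  have hdiff : diagAvg g (n + 1) - diagAvg g n = T / ((n + 1) * (n + 2)) := by
    rw [hid, diagAvg, diagAvg]
    push_cast
    field_simp
    ring
  have hT2 : T ^ 2 ≤ (n + 1) * ((n + 2) ^ 2 * diagEnergy g n) := by
    rw [hT]
    refine sq_sum_le_card_mul_sum_sq.trans ?_
    rw [Finset.Nat.card_antidiagonal, diagEnergy, mul_sum _ _ (((n : ℝ) + 2) ^ 2)]
    push_cast
    refine mul_le_mul_of_nonneg_left (sum_le_sum fun p hp => ?_) (by positivity)
    have h : (p.1 : ℝ) + p.2 = n := by exact_mod_cast mem_antidiagonal.1 hp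
    have ha : (0 : ℝ) ≤ p.1 := Nat.cast_nonneg _
    have hb : (0 : ℝ) ≤ p.2 := Nat.cast_nonneg _
    rw [← h]
    generalize g (p.1 + 1) p.2 - g p.1 p.2 = α
    generalize g p.1 (p.2 + 1) - g p.1 p.2 = β
    generalize (p.1 : ℝ) = u at *
    generalize (p.2 : ℝ) = v at *
    calc ((u + 1) * α + (v + 1) * β) ^ 2
        ≤ ((u + 1) ^ 2 + (v + 1) ^ 2) * (α ^ 2 + β ^ 2) := by
          nlinarith [sq_nonneg ((u + 1) * β - (v + 1) * α)]
      _ ≤ _ := by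
          refine mul_le_mul_of_nonneg_right ?_ (by positivity)
          nlinarith [mul_nonneg ha hb]
  rw [hdiff, div_pow, div_le_iff₀ (by positivity)]
  refine hT2.trans (le_of_eq ?_)
  field_simp

lemma diagAvg_sq_le (g : ℕ → ℕ → ℝ) (n : ℕ) :
    ((n : ℝ) + 1) * diagAvg g n ^ 2 ≤ ∑ p ∈ antidiagonal n, g p.1 p.2 ^ 2 := by
  have h := sq_sum_le_card_mul_sum_sq (s := antidiagonal n) (f := fun p : ℕ × ℕ => g p.1 p.2)
  rw [Finset.Nat.card_antidiagonal] at h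
  push_cast at h
  have hn : (0 : ℝ) < n + 1 := by positivity
  rw [diagAvg, div_pow, ← mul_div_assoc, div_le_iff₀ (by positivity)]
  nlinarith

lemma diagEnergy_nonneg (g : ℕ → ℕ → ℝ) (n : ℕ) : 0 ≤ diagEnergy g n :=
  sum_nonneg fun _ _ => by positivity

/-- The mean over diagonal `N` is close to the corner value: the urn flow has energy at most the
harmonic number of `N`, which `1 + log M` bounds uniformly in `N ≤ M`. -/
lemma diagAvg_zero_sub_sq_le (g : ℕ → ℕ → ℝ) {N M : ℕ} (hNM : N ≤ M) :
    (diagAvg g N - diagAvg g 0) ^ 2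
      ≤ (1 + Real.log M) * ∑ n ∈ range M, diagEnergy g n := by
  rw [← sum_range_sub (diagAvg g) N]
  have hsub : range N ⊆ range M := range_subset_range.2 hNM
  have hharm : ∑ n ∈ range M, 1 / ((n : ℝ) + 1) ≤ 1 + Real.log M := by
    have h := harmonic_le_one_add_log M
    simpa [harmonic] using h
  calc (∑ n ∈ range N, (diagAvg g (n + 1) - diagAvg g n)) ^ 2
      ≤ (∑ n ∈ range N, 1 / ((n : ℝ) + 1)) * ∑ n ∈ range N, diagEnergy g n :=
        sum_sq_le_sum_mul_sum_of_sq_le_mul _ (fun _ _ => by positivity)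
          (fun _ _ => diagEnergy_nonneg g _) (fun n _ => diagAvg_sub_sq_le g n)
    _ ≤ (∑ n ∈ range M, 1 / ((n : ℝ) + 1)) * ∑ n ∈ range M, diagEnergy g n := by
        refine mul_le_mul (sum_le_sum_of_subset_of_nonneg hsub fun _ _ _ => by positivity)
          (sum_le_sum_of_subset_of_nonneg hsub fun _ _ _ => diagEnergy_nonneg g _)
          (sum_nonneg fun _ _ => diagEnergy_nonneg g _) (sum_nonneg fun _ _ => by positivity)
    _ ≤ _ := mul_le_mul_of_nonneg_right hharm (sum_nonneg fun _ _ => diagEnergy_nonneg g _)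

/-- The resolvent estimate on the quadrant, truncated to the first `M` diagonals. -/
lemma quadrant_estimate (g : ℕ → ℕ → ℝ) (M : ℕ) :
    (M : ℝ) ^ 2 * g 0 0 ^ 2 ≤ 4 * ∑ n ∈ range M, ∑ p ∈ antidiagonal n, g p.1 p.2 ^ 2
      + 4 * (M : ℝ) ^ 2 * ((1 + Real.log M) * ∑ n ∈ range M, diagEnergy g n) := by
  set E := (1 + Real.log M) * ∑ n ∈ range M, diagEnergy g n with hE
  have h0 : diagAvg g 0 = g 0 0 := by simp [diagAvg]
  have hE0 : 0 ≤ E := (sq_nonneg _).trans (diagAvg_zero_sub_sq_le g (Nat.zero_le M))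
  have hstep : ∀ N ∈ range M, ((N : ℝ) + 1) * g 0 0 ^ 2
      ≤ 2 * ∑ p ∈ antidiagonal N, g p.1 p.2 ^ 2 + ((N : ℝ) + 1) * (2 * E) := by
    intro N hN
    have h1 := diagAvg_zero_sub_sq_le g (mem_range.1 hN).le
    have h2 := diagAvg_sq_le g N
    rw [h0] at h1
    have h3 : g 0 0 ^ 2 ≤ 2 * diagAvg g N ^ 2 + 2 * E := by
      nlinarith [sq_nonneg (2 * diagAvg g N - g 0 0)]
    have h4 := mul_le_mul_of_nonneg_left h3 (by positivity : (0 : ℝ) ≤ (N : ℝ) + 1)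
    linarith
  have hsum := sum_le_sum hstep
  rw [sum_add_distrib, ← sum_mul, ← sum_mul, ← mul_sum] at hsum
  have hW : ∀ K : ℕ, ∑ N ∈ range K, ((N : ℝ) + 1) = K * (K + 1) / 2 := by
    intro K
    induction K with
    | zero => simp
    | succ K ih => rw [sum_range_succ, ih]; push_cast; ring
  rw [hW] at hsum
  have hM : (M : ℝ) ≤ (M : ℝ) ^ 2 := by exact_mod_cast Nat.le_self_pow two_ne_zero M
  nlinarith [mul_nonneg (sub_nonneg.2 hM) hE0,
    mul_nonneg (Nat.cast_nonneg (α := ℝ) M) (sq_nonneg (g 0 0))]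

/-- Sums over finitely many diagonals of the quadrant with corner `y` are dominated by sums over
the whole lattice. -/
lemma sum_diag_le_finsum (F : (Fin 2 → ℤ) → ℝ) (hF : ∀ x, 0 ≤ F x)
    (hfin : (Function.support F).Finite) (y : Fin 2 → ℤ) (M : ℕ) :
    ∑ n ∈ range M, ∑ p ∈ antidiagonal n, F (y + ![(p.1 : ℤ), (p.2 : ℤ)]) ≤ ∑ᶠ x, F x := by
  rw [sum_sigma', ← tsum_eq_finsum (L := .unconditional _) hfin]
  have hs : Summable F := summable_of_hasFiniteSupport hfin
  rw [← sum_image (f := F) (g := fun q : (_ : ℕ) × ℕ × ℕ => y + ![(q.2.1 : ℤ), (q.2.2 : ℤ)])]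
  · exact hs.sum_le_tsum _ fun x _ => hF x
  · rintro ⟨n, a, b⟩ h ⟨n', a', b'⟩ h' heq
    simp only [coe_sigma, Set.mem_sigma_iff, mem_coe, HasAntidiagonal.mem_antidiagonal] at h h'
    have e := add_left_cancel heq
    have e0 := congrFun e 0
    have e1 := congrFun e 1
    simp at e0 e1
    obtain ⟨-, rfl⟩ := h
    obtain ⟨-, rfl⟩ := h'
    subst e0 e1
    rfl


/-- The lattice Dirichlet form `𝓓_k(f) = Σ_{x ∈ ℤ^k} Σ_{i=1}^k (f(x+e_i) - f(x))²`. -/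
noncomputable def latticeDirichlet (k : ℕ) (f : (Fin k → ℤ) → ℝ) : ℝ :=
  ∑ᶠ x : Fin k → ℤ, ∑ i : Fin k, (f (x + Pi.single i 1) - f x) ^ 2

/-- **Two-dimensional pointwise resolvent estimate with logarithmic blowup:**
`f(y)² ≤ C log(1/λ) (λ‖f‖² + 𝓓₂(f))` for finitely supported `f : ℤ² → ℝ`. -/
theorem pointwise_resolvent_estimate_Z2 :
    ∃ C : ℝ, ∀ lam : ℝ, lam ∈ Set.Ioo (0 : ℝ) (1 / 2) →
      ∀ f : (Fin 2 → ℤ) → ℝ, (Function.support f).Finite →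
        ∀ y : Fin 2 → ℤ,
          (f y) ^ 2 ≤ C * Real.log (1 / lam) *
            (lam * ∑ᶠ x : Fin 2 → ℤ, (f x) ^ 2 + latticeDirichlet 2 f) := by
  refine ⟨16, fun lam hlam f hf y => ?_⟩
  obtain ⟨hl0, hl1⟩ := hlam
  let g : ℕ → ℕ → ℝ := fun a b => f (y + ![(a : ℤ), (b : ℤ)])
  set S := ∑ᶠ x : Fin 2 → ℤ, (f x) ^ 2 with hS
  set D := latticeDirichlet 2 f with hD
  have hS0 : 0 ≤ S := finsum_nonneg fun _ => sq_nonneg _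
  have hD0 : 0 ≤ D := finsum_nonneg fun _ => sum_nonneg fun _ _ => sq_nonneg _
  have hSsum (M : ℕ) : ∑ n ∈ range M, ∑ p ∈ antidiagonal n, g p.1 p.2 ^ 2 ≤ S := by
    refine sum_diag_le_finsum (fun x => f x ^ 2) (fun _ => sq_nonneg _) (hf.subset ?_) y M
    intro x hx
    simpa using hx
  have hDfin : (Function.support fun x : Fin 2 → ℤ =>
      ∑ i : Fin 2, (f (x + Pi.single i 1) - f x) ^ 2).Finite := by
    have hshift (i : Fin 2) : {x : Fin 2 → ℤ | x + Pi.single i 1 ∈ Function.support f}.Finite :=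
      hf.preimage (add_left_injective _).injOn
    refine (hf.union ((hshift 0).union (hshift 1))).subset fun x hx => ?_
    by_contra hcon
    simp only [Set.mem_union, Set.mem_ofPred_eq, Function.mem_support, not_or, not_not] at hcon
    exact hx (by simp [Fin.sum_univ_two, hcon.1, hcon.2.1, hcon.2.2])
  have hDsum (M : ℕ) : ∑ n ∈ range M, diagEnergy g n ≤ D := by
    refine le_trans (le_of_eq ?_) (sum_diag_le_finsum _
      (fun x => sum_nonneg fun _ _ => sq_nonneg _) hDfin y M)
    refine sum_congr rfl fun n _ => sum_congr rfl fun p _ => ?_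
    have e0 : y + ![(p.1 : ℤ), (p.2 : ℤ)] + Pi.single 0 1 = y + ![((p.1 + 1 : ℕ) : ℤ), (p.2 : ℤ)] := by
      ext i; fin_cases i <;> simp [add_assoc, Matrix.vecHead, Matrix.vecTail]
    have e1 : y + ![(p.1 : ℤ), (p.2 : ℤ)] + Pi.single 1 1 = y + ![(p.1 : ℤ), ((p.2 + 1 : ℕ) : ℤ)] := by
      ext i; fin_cases i <;> simp [add_assoc, Matrix.vecHead, Matrix.vecTail]
    rw [Fin.sum_univ_two, e0, e1]
  have hg0 : g 0 0 = f y := by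
    simp only [g]
    congr 1
    ext i; fin_cases i <;> simp
  set L := Real.log (1 / lam) with hL
  have hlog2 : Real.log 2 ≤ L :=
    Real.log_le_log two_pos (by rw [le_div_iff₀ hl0]; linarith)
  have hL2 : 1 / 2 < L := lt_of_lt_of_le (by linarith [Real.log_two_gt_d9]) hlog2
  obtain ⟨M, hM1, hM2⟩ : ∃ M : ℕ, 1 / lam ≤ M ∧ (M : ℝ) ≤ 2 * (1 / lam) := by
    refine ⟨⌈1 / lam⌉₊, Nat.le_ceil _, ?_⟩
    have h1 : 1 ≤ 1 / lam := by rw [le_div_iff₀ hl0]; linarith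
    linarith [Nat.ceil_lt_add_one (by positivity : 0 ≤ 1 / lam)]
  have hlam1 : 2 < 1 / lam := by rw [lt_div_iff₀ hl0]; linarith
  have hMpos : (0 : ℝ) < M := by linarith
  have hlogM : 1 + Real.log M ≤ 4 * L := by
    have h := Real.log_le_log hMpos hM2
    rw [Real.log_mul two_ne_zero (by positivity)] at h
    linarith
  have hlogM0 : 0 ≤ 1 + Real.log M := by
    linarith [Real.log_nonneg (by linarith : (1 : ℝ) ≤ M)]
  have key := quadrant_estimate g M
  rw [hg0] at key
  have hE : (1 + Real.log M) * ∑ n ∈ range M, diagEnergy g n ≤ 4 * L * D :=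
    mul_le_mul hlogM (hDsum M) (sum_nonneg fun _ _ => diagEnergy_nonneg g _) (by linarith)
  have hlamM : 1 ≤ lam * (M : ℝ) ^ 2 := by
    have h1 : 1 ≤ lam * M := by rw [div_le_iff₀ hl0] at hM1; linarith
    nlinarith
  have h1 : S ≤ (M : ℝ) ^ 2 * (2 * L * (lam * S)) := by
    have ha : S ≤ lam * (M : ℝ) ^ 2 * S := le_mul_of_one_le_left hS0 hlamM
    have hb : lam * (M : ℝ) ^ 2 * S ≤ 2 * L * (lam * (M : ℝ) ^ 2 * S) :=
      le_mul_of_one_le_left (by positivity) (by linarith)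
    linarith
  have h2 : (M : ℝ) ^ 2 * (f y) ^ 2 ≤ (M : ℝ) ^ 2 * (16 * L * (lam * S + D)) := by
    have h3 := mul_le_mul_of_nonneg_left hE (by positivity : (0 : ℝ) ≤ 4 * (M : ℝ) ^ 2)
    have h4 : 0 ≤ (M : ℝ) ^ 2 * (L * (lam * S)) := by positivity
    linarith [hSsum M]
  exact le_of_mul_le_mul_left h2 (by positivity)
end

section
/- Let d ≥ 1, λ ≥ 0, let Λ₀ be a finite subset of ℤ^d, and let x ∈ ℤ^d and 1 ≤ i ≤ d be such that exactly one of x, x+e_i lies in Λ₀. Then for every function g from the finite subsets of ℤ^d to ℝ which is nonzero only on finitely many subsets, one has 2·( g(Λ₀) − g(Λ₀^{x,x+e_i}) ) − λ·Σ_Λ g(Λ)² − 𝓔_swap(g) ≤ 2. Consequently ⟨⟨δ_{Λ₀} − δ_{Λ₀^{x,x+e_i}}, (λ − S₀)⁻¹ (δ_{Λ₀} − δ_{Λ₀^{x,x+e_i}})⟩⟩ ≤ 2, where S₀ is the generator whose Dirichlet form is 𝓔_swap. -/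
/-!
The edge `{x, x + e_i}` contributes to `𝓔_swap(g)` once at `Λ₀` and once at its swap
`Λ₁ = Λ₀^{x,x+e_i}`, because the swap is an involution. All summands are nonnegative, so with
`D = g(Λ₀) - g(Λ₁)` we get `D² ≤ 𝓔_swap(g)` (`sq_le_swapDirichlet`), and
`2 D - D² ≤ 1`. The only other point is that the `finsum`s in `𝓔_swap` are genuine sums:
a finite set meets finitely many edges (`finite_boundaryEdges`), so
each inner sum is finite, and each configuration in the support of `g` is reached by a swap from
only finitely many others (`finite_support_localEnergy`).
-/

/-- `Λ^{u,v}`: the finite set obtained from `Λ` by exchanging the membership of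
`u` and `v` (equals `Λ` unless exactly one of them lies in `Λ`). -/
def swapPair {d : ℕ} (Λ : Finset (Fin d → ℤ)) (u v : Fin d → ℤ) : Finset (Fin d → ℤ) :=
  if u ∈ Λ ∧ v ∉ Λ then insert v (Λ.erase u)
  else if v ∈ Λ ∧ u ∉ Λ then insert u (Λ.erase v)
  else Λ

/-- The swap Dirichlet form
`𝓔_swap(g) = (1/2) Σ_Λ Σ_{x, i, |Λ ∩ {x,x+e_i}| = 1} (g(Λ^{x,x+e_i}) - g(Λ))²`. -/
noncomputable def swapDirichlet (d : ℕ) (g : Finset (Fin d → ℤ) → ℝ) : ℝ :=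
  (1 / 2) * ∑ᶠ Λ : Finset (Fin d → ℤ), ∑ᶠ x : Fin d → ℤ, ∑ i : Fin d,
    (if (x ∈ Λ ∧ x + Pi.single i 1 ∉ Λ) ∨ (x ∉ Λ ∧ x + Pi.single i 1 ∈ Λ) then
      (g (swapPair Λ x (x + Pi.single i 1)) - g Λ) ^ 2 else 0)

/-- Exactly one of `x`, `x + e_i` lies in `Λ`. -/
def IsBoundaryEdge {d : ℕ} (Λ : Finset (Fin d → ℤ)) (x : Fin d → ℤ) (i : Fin d) : Prop :=
  (x ∈ Λ ∧ x + Pi.single i 1 ∉ Λ) ∨ (x ∉ Λ ∧ x + Pi.single i 1 ∈ Λ)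

/-- The terms of `𝓔_swap(g)` (without the factor `1/2`) at a fixed `Λ` and a fixed site `x`. -/
noncomputable def siteEnergy {d : ℕ} (g : Finset (Fin d → ℤ) → ℝ) (Λ : Finset (Fin d → ℤ))
    (x : Fin d → ℤ) : ℝ :=
  ∑ i : Fin d,
    (if (x ∈ Λ ∧ x + Pi.single i 1 ∉ Λ) ∨ (x ∉ Λ ∧ x + Pi.single i 1 ∈ Λ) then
      (g (swapPair Λ x (x + Pi.single i 1)) - g Λ) ^ 2 else 0)

lemma siteEnergy_nonneg {d : ℕ} (g : Finset (Fin d → ℤ) → ℝ) (Λ : Finset (Fin d → ℤ))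
    (x : Fin d → ℤ) : 0 ≤ siteEnergy g Λ x :=
  Finset.sum_nonneg fun i _ => by split_ifs <;> positivity

lemma exists_of_siteEnergy_ne_zero {d : ℕ} {g : Finset (Fin d → ℤ) → ℝ}
    {Λ : Finset (Fin d → ℤ)} {x : Fin d → ℤ} (h : siteEnergy g Λ x ≠ 0) :
    ∃ i, IsBoundaryEdge Λ x i ∧ g (swapPair Λ x (x + Pi.single i 1)) - g Λ ≠ 0 := by
  obtain ⟨i, -, hi⟩ := Finset.exists_ne_zero_of_sum_ne_zero h
  by_cases hb : (x ∈ Λ ∧ x + Pi.single i 1 ∉ Λ) ∨ (x ∉ Λ ∧ x + Pi.single i 1 ∈ Λ)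
  · rw [if_pos hb] at hi
    exact ⟨i, hb, fun h0 => hi (by rw [h0]; norm_num)⟩
  · exact absurd (if_neg hb) hi

lemma IsBoundaryEdge.swapPair {d : ℕ} {Λ : Finset (Fin d → ℤ)} {x : Fin d → ℤ} {i : Fin d}
    (h : IsBoundaryEdge Λ x i) : IsBoundaryEdge (swapPair Λ x (x + Pi.single i 1)) x i := by
  unfold IsBoundaryEdge _root_.swapPair at *
  generalize x + Pi.single i 1 = y at *
  rcases h with ⟨hx, hy⟩ | ⟨hx, hy⟩
  · have hne : x ≠ y := fun e => hy (e ▸ hx)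
    simp [hx, hy, hne]
  · have hne : x ≠ y := fun e => hx (e ▸ hy)
    simp [hx, hy, hne.symm]

lemma swapPair_swapPair {d : ℕ} {Λ : Finset (Fin d → ℤ)} {x : Fin d → ℤ} {i : Fin d}
    (h : IsBoundaryEdge Λ x i) :
    swapPair (swapPair Λ x (x + Pi.single i 1)) x (x + Pi.single i 1) = Λ := by
  unfold IsBoundaryEdge at h
  unfold swapPair
  generalize x + Pi.single i 1 = y at *
  rcases h with ⟨hx, hy⟩ | ⟨hx, hy⟩
  · have hne : x ≠ y := fun e => hy (e ▸ hx)
    simp [hx, hy, hne]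
  · have hne : x ≠ y := fun e => hx (e ▸ hy)
    simp [hx, hy, hne.symm]

lemma swapPair_ne {d : ℕ} {Λ : Finset (Fin d → ℤ)} {x : Fin d → ℤ} {i : Fin d}
    (h : IsBoundaryEdge Λ x i) : swapPair Λ x (x + Pi.single i 1) ≠ Λ := by
  unfold IsBoundaryEdge at h
  unfold swapPair
  generalize x + Pi.single i 1 = y at *
  rcases h with ⟨hx, hy⟩ | ⟨hx, hy⟩
  · simp only [hx, hy, not_false_eq_true, and_self, if_true]
    exact fun e => hy (e ▸ Finset.mem_insert_self _ _)
  · simp only [hx, hy, not_false_eq_true, and_self, if_true, false_and, if_false]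
    exact fun e => hx (e ▸ Finset.mem_insert_self _ _)

lemma finite_boundaryEdges {d : ℕ} (Λ : Finset (Fin d → ℤ)) :
    {p : (Fin d → ℤ) × Fin d | IsBoundaryEdge Λ p.1 p.2}.Finite := by
  have h1 : ((Λ : Set (Fin d → ℤ)) ×ˢ (Set.univ : Set (Fin d))).Finite :=
    Λ.finite_toSet.prod Set.finite_univ
  refine (h1.union (h1.image fun p => (p.1 - Pi.single p.2 1, p.2))).subset ?_
  rintro ⟨x, i⟩ (⟨hx, -⟩ | ⟨-, hy⟩)
  · exact Or.inl ⟨hx, trivial⟩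
  · exact Or.inr ⟨(x + Pi.single i 1, i), ⟨hy, trivial⟩, by simp⟩

lemma finite_support_siteEnergy {d : ℕ} (g : Finset (Fin d → ℤ) → ℝ) (Λ : Finset (Fin d → ℤ)) :
    (Function.support (siteEnergy g Λ)).Finite := by
  refine ((finite_boundaryEdges Λ).image Prod.fst).subset fun x hx => ?_
  obtain ⟨i, hi, -⟩ := exists_of_siteEnergy_ne_zero hx
  exact ⟨(x, i), hi, rfl⟩

/-- If the energy at `Λ` is nonzero then `Λ` is in the support of `g`, or is obtained from
another set in the support by swapping one of its boundary edges. -/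
lemma finite_support_localEnergy {d : ℕ} {g : Finset (Fin d → ℤ) → ℝ}
    (hg : (Function.support g).Finite) :
    (Function.support fun Λ => ∑ᶠ x, siteEnergy g Λ x).Finite := by
  refine (hg.union (hg.biUnion fun Λ' _ => (finite_boundaryEdges Λ').image
    fun p => swapPair Λ' p.1 (p.1 + Pi.single p.2 1))).subset fun Λ hΛ => ?_
  obtain ⟨x, hx⟩ : ∃ x, siteEnergy g Λ x ≠ 0 := by
    by_contra! h0
    exact hΛ (by simp [h0])
  obtain ⟨i, hb, hi⟩ := exists_of_siteEnergy_ne_zero hx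
  by_cases h0 : g Λ = 0
  · refine Or.inr (Set.mem_biUnion (x := swapPair Λ x (x + Pi.single i 1)) ?_
      ⟨(x, i), hb.swapPair, swapPair_swapPair hb⟩)
    simpa [h0] using hi
  · exact Or.inl h0

lemma sq_le_localEnergy {d : ℕ} (g : Finset (Fin d → ℤ) → ℝ) {Λ : Finset (Fin d → ℤ)}
    {x : Fin d → ℤ} {i : Fin d} (h : IsBoundaryEdge Λ x i) :
    (g (swapPair Λ x (x + Pi.single i 1)) - g Λ) ^ 2 ≤ ∑ᶠ y, siteEnergy g Λ y := by
  refine le_trans ?_ (single_le_finsum x (finite_support_siteEnergy g Λ) (siteEnergy_nonneg g Λ))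
  have hs := Finset.single_le_sum (s := Finset.univ) (f := fun j : Fin d =>
    (if (x ∈ Λ ∧ x + Pi.single j 1 ∉ Λ) ∨ (x ∉ Λ ∧ x + Pi.single j 1 ∈ Λ) then
      (g (swapPair Λ x (x + Pi.single j 1)) - g Λ) ^ 2 else 0))
    (fun j _ => by split_ifs <;> positivity) (Finset.mem_univ i)
  unfold IsBoundaryEdge at h
  rwa [if_pos h] at hs

/-- The two orientations of the swap, at `Λ` and at its image, cancel the factor `1/2`. -/
lemma sq_le_swapDirichlet {d : ℕ} {g : Finset (Fin d → ℤ) → ℝ}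
    (hg : (Function.support g).Finite) {Λ : Finset (Fin d → ℤ)} {x : Fin d → ℤ} {i : Fin d}
    (h : IsBoundaryEdge Λ x i) :
    (g Λ - g (swapPair Λ x (x + Pi.single i 1))) ^ 2 ≤ swapDirichlet d g := by
  classical
  have h1 := sq_le_localEnergy g h
  have h2 := sq_le_localEnergy g h.swapPair
  rw [swapPair_swapPair h] at h2
  have hne := swapPair_ne h
  set Λ' := swapPair Λ x (x + Pi.single i 1)
  have hfin := finite_support_localEnergy hg
  have hE : swapDirichlet d g = (1 / 2) * ∑ᶠ Λ, ∑ᶠ x, siteEnergy g Λ x := rfl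
  have hsum : ∑ᶠ x, siteEnergy g Λ x + ∑ᶠ x, siteEnergy g Λ' x
      ≤ ∑ᶠ Λ, ∑ᶠ x, siteEnergy g Λ x := by
    rw [finsum_eq_sum_of_support_subset (s := hfin.toFinset ∪ {Λ, Λ'}) _
      (fun M hM => by simp only [Finset.coe_union, Set.Finite.coe_toFinset]; exact Or.inl hM),
      ← Finset.sum_pair (f := fun M => ∑ᶠ x, siteEnergy g M x) hne.symm]
    exact Finset.sum_le_sum_of_subset_of_nonneg Finset.subset_union_right
      fun M _ _ => finsum_nonneg (siteEnergy_nonneg g M)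
  rw [hE]
  linarith [sub_sq_comm (g Λ) (g Λ')]

/-- **Triviality criterion, key step:** for a nearest-neighbour pair with exactly one
endpoint in `Λ₀`, `2(g(Λ₀) - g(Λ₀^{x,x+e_i})) - λ‖g‖² - 𝓔_swap(g) ≤ 2` for all finitely
supported `g`; consequently the `H₋₁` norm of the discrete gradient `δ_{Λ₀} - δ_{Λ₀^{x,x+e_i}}`
(i.e. the supremum of that expression over `g`) is at most `2`. -/
theorem discrete_gradient_H_neg_one_bound
    (d : ℕ) (hd : 1 ≤ d) (lam : ℝ) (hlam : 0 ≤ lam)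
    (Λ₀ : Finset (Fin d → ℤ)) (x : Fin d → ℤ) (i : Fin d)
    (hx : (x ∈ Λ₀ ∧ x + Pi.single i 1 ∉ Λ₀) ∨ (x ∉ Λ₀ ∧ x + Pi.single i 1 ∈ Λ₀)) :
    (∀ g : Finset (Fin d → ℤ) → ℝ, (Function.support g).Finite →
        2 * (g Λ₀ - g (swapPair Λ₀ x (x + Pi.single i 1)))
          - lam * ∑ᶠ Λ : Finset (Fin d → ℤ), (g Λ) ^ 2 - swapDirichlet d g ≤ 2) ∧
    sSup {r : ℝ | ∃ g : Finset (Fin d → ℤ) → ℝ, (Function.support g).Finite ∧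
        r = 2 * (g Λ₀ - g (swapPair Λ₀ x (x + Pi.single i 1)))
          - lam * ∑ᶠ Λ : Finset (Fin d → ℤ), (g Λ) ^ 2 - swapDirichlet d g} ≤ 2 := by
  have key : ∀ g : Finset (Fin d → ℤ) → ℝ, (Function.support g).Finite →
      2 * (g Λ₀ - g (swapPair Λ₀ x (x + Pi.single i 1)))
        - lam * ∑ᶠ Λ : Finset (Fin d → ℤ), (g Λ) ^ 2 - swapDirichlet d g ≤ 2 := by
    intro g hg
    have h1 := sq_le_swapDirichlet hg hx
    have h2 : 0 ≤ lam * ∑ᶠ Λ : Finset (Fin d → ℤ), (g Λ) ^ 2 :=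
      mul_nonneg hlam (finsum_nonneg fun Λ => sq_nonneg _)
    nlinarith [sq_nonneg (g Λ₀ - g (swapPair Λ₀ x (x + Pi.single i 1)) - 1)]
  refine ⟨key, Real.sSup_le ?_ zero_le_two⟩
  rintro r ⟨g, hg, rfl⟩
  exact key g hg
end

section
/- Let n ≥ 2 and m = n − 1. For y ∈ ℤ₊^m and 1 ≤ i ≤ n define τ_i y as follows: for 2 ≤ i ≤ m, τ_i y = y + e_{i−1} − e_i if y_i > 0 and τ_i y = y otherwise; τ₁ y = y − e₁ if y₁ > 0 and τ₁ y = y otherwise; and τ_n y = y + e_m. For a finitely supported f : ℤ₊^m → ℝ define (T f)(y) = Σ_{i=1}^n ( f(τ_i y) − f(y) ). Then there exists a universal constant C < ∞ such that for all finitely supported f, g : ℤ₊^m → ℝ, ( Σ_{y ∈ ℤ₊^m} g(y) · (T f)(y) )² ≤ C · n² · 𝓔_m(f) · 𝓔_m(g). In particular ⟨T f, (λ − S₀)⁻¹ T f⟩ ≤ C n² ⟨f, (λ − S₀) f⟩ for every λ > 0, where S₀ is the generator whose Dirichlet form is 𝓔_m. -/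
/-- The displacement vector of the map `τ_i` (0-indexed `i : Fin (m+1)`):
`i = 0 ↦ -e₁`, `1 ≤ i ≤ m-1 ↦ e_i - e_{i+1}` (1-indexed), `i = m ↦ e_m`. -/
def tauVec (m : ℕ) (i : Fin (m + 1)) : Fin m → ℤ :=
  fun c => (if (c : ℕ) + 1 = (i : ℕ) then 1 else 0) - (if (c : ℕ) = (i : ℕ) then 1 else 0)

/-- The map `τ_i : ℤ₊^m → ℤ₊^m` (performing the move if possible, else identity). -/
def tauMap (m : ℕ) (i : Fin (m + 1)) (y : Fin m → ℕ) : Fin m → ℕ :=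
  if okMove (tauVec m i) y then moveTo (tauVec m i) y else y

/-- The dimension-reduced degree-preserving operator
`(T f)(y) = Σ_{i=1}^{n} (f(τ_i y) - f(y))`, `n = m + 1`. -/
noncomputable def TauOp (m : ℕ) (f : (Fin m → ℕ) → ℝ) (y : Fin m → ℕ) : ℝ :=
  ∑ i : Fin (m + 1), (f (tauMap m i y) - f y)

/-! ### The cycle based at a point -/

/-- The `k`-th vertex of the cycle based at `z`, traversed backwards: `z + e_k` (1-indexed), with
the convention that it is `z` itself for `k = 0` and `k = m + 1`. -/
def cyc (m k : ℕ) (z : Fin m → ℕ) : Fin m → ℕ :=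
  fun c => z c + if (c : ℕ) + 1 = k then 1 else 0

lemma cyc_injective (m k : ℕ) : Function.Injective (cyc m k) := by
  intro a b h
  funext c
  have := congrFun h c
  simpa [cyc] using this

lemma cyc_zero (m : ℕ) (z : Fin m → ℕ) : cyc m 0 z = z := by
  funext c; simp [cyc]

lemma cyc_last (m : ℕ) (z : Fin m → ℕ) : cyc m (m + 1) z = z := by
  funext c
  have := c.2
  simp only [cyc]
  split_ifs <;> omega

lemma mem_range_cyc {m k : ℕ} (y : Fin m → ℕ) :
    y ∈ Set.range (cyc m k) ↔ ∀ c : Fin m, (c : ℕ) + 1 = k → 0 < y c := by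
  constructor
  · rintro ⟨z, rfl⟩ c hc
    simp [cyc, hc]
  · intro h
    refine ⟨fun c => y c - if (c : ℕ) + 1 = k then 1 else 0, ?_⟩
    funext c
    have := h c
    simp only [cyc]
    split_ifs with hc
    · have := this hc
      omega
    · omega

lemma okMove_tauVec {m : ℕ} (i : Fin (m + 1)) (y : Fin m → ℕ) :
    okMove (tauVec m i) y ↔ y ∈ Set.range (cyc m (i + 1)) := by
  rw [mem_range_cyc]
  refine forall_congr' fun c => ?_
  simp only [tauVec]
  split_ifs <;> omega

lemma okMove_stepVec {m : ℕ} (i : Fin (m + 1)) (y : Fin m → ℕ) :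
    okMove (stepVec m i) y ↔ y ∈ Set.range (cyc m i) := by
  rw [mem_range_cyc]
  refine forall_congr' fun c => ?_
  simp only [stepVec]
  split_ifs <;> omega

lemma moveTo_tauVec {m : ℕ} (i : Fin (m + 1)) (z : Fin m → ℕ) :
    moveTo (tauVec m i) (cyc m (i + 1) z) = cyc m i z := by
  funext c
  simp only [moveTo, tauVec, cyc]
  split_ifs <;> omega

lemma moveTo_stepVec {m : ℕ} (i : Fin (m + 1)) (z : Fin m → ℕ) :
    moveTo (stepVec m i) (cyc m i z) = cyc m (i + 1) z := by
  funext c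
  simp only [moveTo, stepVec, cyc]
  split_ifs <;> omega

lemma neg_stepVec (m : ℕ) (i : Fin (m + 1)) : (-1 : ℤ) • stepVec m i = tauVec m i := by
  funext c
  simp [stepVec, tauVec]

/-! ### Cycle decomposition -/

/-- Change of variables `y = q z` in a sum restricted to the range of an injective map `q`. -/
lemma finsum_ite_range {α : Type*} (q : α → α) (hq : Function.Injective q) (p : α → Prop)
    [DecidablePred p] (hp : ∀ y, p y ↔ y ∈ Set.range q) (H G : α → ℝ) (hG : ∀ z, H (q z) = G z)
    (hfin : (Function.support G).Finite) :
    (Function.support fun y => if p y then H y else 0).Finite ∧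
      ∑ᶠ y, (if p y then H y else 0) = ∑ᶠ z, G z := by
  classical
  constructor
  · refine (hfin.image q).subset fun y hy => ?_
    by_cases h : p y
    · obtain ⟨z, rfl⟩ := (hp y).1 h
      refine ⟨z, ?_, rfl⟩
      simpa [h, hG] using hy
    · simp [h] at hy
  · have h1 := finsum_mem_range (f := H) hq
    rw [finsum_mem_def] at h1
    simp only [hG] at h1
    rw [← h1]
    refine finsum_congr fun y => ?_
    simp [Set.indicator_apply, hp]

lemma support_cyc_finite {m : ℕ} {f : (Fin m → ℕ) → ℝ} (hf : (Function.support f).Finite)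
    (k : ℕ) : (Function.support fun z => f (cyc m k z)).Finite :=
  hf.preimage (cyc_injective m k).injOn

lemma support_diff_finite {m : ℕ} {f : (Fin m → ℕ) → ℝ} (hf : (Function.support f).Finite)
    (k : ℕ) : (Function.support fun z => (f (cyc m k z) - f (cyc m (k + 1) z)) ^ 2).Finite := by
  refine ((support_cyc_finite hf k).union (support_cyc_finite hf (k + 1))).subset fun z hz => ?_
  by_contra h
  simp only [Set.mem_union, Function.mem_support, not_or, not_not] at h
  simp [h.1, h.2] at hz

/-- The Dirichlet form of the cycle based at `z`. -/
noncomputable def cycEnergy (m : ℕ) (f : (Fin m → ℕ) → ℝ) (z : Fin m → ℕ) : ℝ :=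
  ∑ i : Fin (m + 1), (f (cyc m i z) - f (cyc m (i + 1) z)) ^ 2

/-- The bilinear form `⟨g, T f⟩` restricted to the cycle based at `z`. -/
noncomputable def cycForm (m : ℕ) (f g : (Fin m → ℕ) → ℝ) (z : Fin m → ℕ) : ℝ :=
  ∑ i : Fin (m + 1), g (cyc m (i + 1) z) * (f (cyc m i z) - f (cyc m (i + 1) z))

lemma support_sum_finite {α ι : Type*} [Fintype ι] (F : ι → α → ℝ)
    (h : ∀ i, (Function.support (F i)).Finite) :
    (Function.support fun z => ∑ i, F i z).Finite := by
  refine (Set.finite_iUnion h).subset fun z hz => ?_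
  obtain ⟨i, _, hi⟩ := Finset.exists_ne_zero_of_sum_ne_zero hz
  exact Set.mem_iUnion.2 ⟨i, hi⟩

lemma cycEnergy_support {m : ℕ} {f : (Fin m → ℕ) → ℝ} (hf : (Function.support f).Finite) :
    (Function.support (cycEnergy m f)).Finite :=
  support_sum_finite _ fun i => support_diff_finite hf i

lemma cycForm_term_support {m : ℕ} (f : (Fin m → ℕ) → ℝ) {g : (Fin m → ℕ) → ℝ}
    (hg : (Function.support g).Finite) (k : ℕ) :
    (Function.support fun z =>
      g (cyc m (k + 1) z) * (f (cyc m k z) - f (cyc m (k + 1) z))).Finite :=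
  (support_cyc_finite hg (k + 1)).subset fun _ hz => left_ne_zero_of_mul hz

lemma cycForm_support {m : ℕ} (f : (Fin m → ℕ) → ℝ) {g : (Fin m → ℕ) → ℝ}
    (hg : (Function.support g).Finite) : (Function.support (cycForm m f g)).Finite :=
  support_sum_finite _ fun i => cycForm_term_support f hg i

/-- Cycle decomposition of the Dirichlet form: every undirected edge lies on exactly one cycle
(for `m = 1` edges are double, and the cycle at `z` consists of the two copies of `{z, z + 1}`). -/
lemma exclDirichlet_eq {m : ℕ} {f : (Fin m → ℕ) → ℝ} (hf : (Function.support f).Finite) :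
    exclDirichlet m f = ∑ᶠ z, cycEnergy m f z := by
  have hA := fun i : Fin (m + 1) => finsum_ite_range (cyc m i) (cyc_injective m i)
    (okMove (stepVec m i)) (okMove_stepVec i)
    (fun y => (f (moveTo (stepVec m i) y) - f y) ^ 2)
    (fun z => (f (cyc m i z) - f (cyc m (i + 1) z)) ^ 2)
    (fun z => by simp only [moveTo_stepVec]; ring) (support_diff_finite hf i)
  have hB := fun i : Fin (m + 1) => finsum_ite_range (cyc m (i + 1)) (cyc_injective m (i + 1))
    (okMove (tauVec m i)) (okMove_tauVec i)
    (fun y => (f (moveTo (tauVec m i) y) - f y) ^ 2)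
    (fun z => (f (cyc m i z) - f (cyc m (i + 1) z)) ^ 2)
    (fun z => by simp only [moveTo_tauVec]) (support_diff_finite hf i)
  have h1 : ∀ (y : Fin m → ℕ) (j : Fin (m + 1)), (∑ ε ∈ ({1, -1} : Finset ℤ),
      (if okMove (ε • stepVec m j) y then (f (moveTo (ε • stepVec m j) y) - f y) ^ 2 else 0)) =
      (if okMove (stepVec m j) y then (f (moveTo (stepVec m j) y) - f y) ^ 2 else 0) +
      (if okMove (tauVec m j) y then (f (moveTo (tauVec m j) y) - f y) ^ 2 else 0) := by
    intro y j
    rw [Finset.sum_pair (by norm_num)]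
    simp only [neg_stepVec, one_smul]
  unfold exclDirichlet cycEnergy
  simp only [h1, Finset.sum_add_distrib]
  rw [finsum_add_distrib (support_sum_finite _ fun i => (hA i).1)
      (support_sum_finite _ fun i => (hB i).1),
    finsum_sum_comm _ _ fun i _ => (hA i).1, finsum_sum_comm _ _ fun i _ => (hB i).1,
    finsum_sum_comm _ _ fun i _ => support_diff_finite hf (i : Fin (m + 1)),
    Finset.sum_congr rfl fun i _ => (hA i).2, Finset.sum_congr rfl fun i _ => (hB i).2]
  ring

/-- Cycle decomposition of `⟨g, T f⟩`: every allowed move lies on exactly one cycle. -/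
lemma pairing_eq {m : ℕ} (f : (Fin m → ℕ) → ℝ) {g : (Fin m → ℕ) → ℝ}
    (hg : (Function.support g).Finite) :
    ∑ᶠ y, g y * TauOp m f y = ∑ᶠ z, cycForm m f g z := by
  have hB := fun i : Fin (m + 1) => finsum_ite_range (cyc m (i + 1)) (cyc_injective m (i + 1))
    (okMove (tauVec m i)) (okMove_tauVec i)
    (fun y => g y * (f (moveTo (tauVec m i) y) - f y))
    (fun z => g (cyc m (i + 1) z) * (f (cyc m i z) - f (cyc m (i + 1) z)))
    (fun z => by simp only [moveTo_tauVec]) (cycForm_term_support f hg i)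
  have h1 : ∀ y, g y * TauOp m f y = ∑ i : Fin (m + 1),
      (if okMove (tauVec m i) y then g y * (f (moveTo (tauVec m i) y) - f y) else 0) := by
    intro y
    unfold TauOp tauMap
    rw [Finset.mul_sum]
    refine Finset.sum_congr rfl fun i _ => ?_
    split_ifs <;> simp
  unfold cycForm
  simp only [h1]
  rw [finsum_sum_comm _ _ fun i _ => (hB i).1,
    finsum_sum_comm _ _ fun i _ => cycForm_term_support f hg (i : Fin (m + 1)),
    Finset.sum_congr rfl fun i _ => (hB i).2]

/-! ### Cauchy-Schwarz -/

/-- The sector bound on a single closed path `u 0, …, u n = u 0`. -/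
lemma cycle_bound (n : ℕ) (u v : ℕ → ℝ) (hu : u n = u 0) :
    (∑ i ∈ Finset.range n, v (i + 1) * (u i - u (i + 1))) ^ 2 ≤
      ((n : ℝ) ^ 2 * ∑ i ∈ Finset.range n, (u i - u (i + 1)) ^ 2) *
        ∑ i ∈ Finset.range n, (v i - v (i + 1)) ^ 2 := by
  set E := ∑ i ∈ Finset.range n, (v i - v (i + 1)) ^ 2
  -- The increments of `u` sum to zero, so `v` may be recentred at `v 0`.
  have h0 : ∑ i ∈ Finset.range n, v (i + 1) * (u i - u (i + 1)) =
      ∑ i ∈ Finset.range n, (v (i + 1) - v 0) * (u i - u (i + 1)) := by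
    simp only [sub_mul, Finset.sum_sub_distrib (f := fun i => v (i + 1) * (u i - u (i + 1)))]
    rw [← Finset.mul_sum, Finset.sum_range_sub' u n, hu]
    ring
  have hosc : ∀ i ∈ Finset.range n, (v (i + 1) - v 0) ^ 2 ≤ n * E := by
    intro i hi
    have hi' : i + 1 ≤ n := Finset.mem_range.1 hi
    have ht : v (i + 1) - v 0 = -∑ k ∈ Finset.range (i + 1), (v k - v (k + 1)) := by
      rw [Finset.sum_range_sub' v]
      ring
    rw [ht, neg_sq]
    calc (∑ k ∈ Finset.range (i + 1), (v k - v (k + 1))) ^ 2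
        ≤ ((Finset.range (i + 1)).card : ℝ) *
            ∑ k ∈ Finset.range (i + 1), (v k - v (k + 1)) ^ 2 := sq_sum_le_card_mul_sum_sq
      _ ≤ n * E := by
          rw [Finset.card_range]
          gcongr
          exact Finset.sum_le_sum_of_subset_of_nonneg
            (Finset.range_subset_range.2 hi') fun _ _ _ => sq_nonneg _
  rw [h0]
  calc _ ≤ (∑ i ∈ Finset.range n, (v (i + 1) - v 0) ^ 2) *
        ∑ i ∈ Finset.range n, (u i - u (i + 1)) ^ 2 := Finset.sum_mul_sq_le_sq_mul_sq _ _ _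
    _ ≤ (n * (n * E)) * ∑ i ∈ Finset.range n, (u i - u (i + 1)) ^ 2 := by
        gcongr
        refine (Finset.sum_le_sum hosc).trans_eq ?_
        simp
    _ = _ := by ring

lemma cycForm_sq_le {m : ℕ} (f g : (Fin m → ℕ) → ℝ) (z : Fin m → ℕ) :
    cycForm m f g z ^ 2 ≤ (((m : ℝ) + 1) ^ 2 * cycEnergy m f z) * cycEnergy m g z := by
  have h := cycle_bound (m + 1) (fun k => f (cyc m k z)) (fun k => g (cyc m k z))
    (by simp only [cyc_zero, cyc_last])
  simpa only [cycForm, cycEnergy, Finset.sum_range, Nat.cast_add, Nat.cast_one] using h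

lemma cycEnergy_nonneg {m : ℕ} (f : (Fin m → ℕ) → ℝ) (z : Fin m → ℕ) : 0 ≤ cycEnergy m f z :=
  Finset.sum_nonneg fun _ _ => sq_nonneg _

lemma pairing_sq_le {m : ℕ} {f g : (Fin m → ℕ) → ℝ} (hf : (Function.support f).Finite)
    (hg : (Function.support g).Finite) :
    (∑ᶠ y, g y * TauOp m f y) ^ 2 ≤
      ((m : ℝ) + 1) ^ 2 * exclDirichlet m f * exclDirichlet m g := by
  classical
  rw [pairing_eq f hg, exclDirichlet_eq hf, exclDirichlet_eq hg]
  have h1 := cycForm_support f hg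
  have h2 := cycEnergy_support hf
  have h3 := cycEnergy_support hg
  set S := h1.toFinset ∪ h2.toFinset ∪ h3.toFinset
  rw [finsum_eq_sum_of_support_subset (s := S) (cycForm m f g) (by intro z hz; simp_all [S]),
    finsum_eq_sum_of_support_subset (s := S) (cycEnergy m f) (by intro z hz; simp_all [S]),
    finsum_eq_sum_of_support_subset (s := S) (cycEnergy m g) (by intro z hz; simp_all [S]),
    Finset.mul_sum _ _ (((m : ℝ) + 1) ^ 2)]
  exact Finset.sum_sq_le_sum_mul_sum_of_sq_le_mul S
    (fun z _ => mul_nonneg (by positivity) (cycEnergy_nonneg f z))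
    (fun z _ => cycEnergy_nonneg g z) fun z _ => cycForm_sq_le f g z

lemma exclDirichlet_nonneg {m : ℕ} {f : (Fin m → ℕ) → ℝ} (hf : (Function.support f).Finite) :
    0 ≤ exclDirichlet m f := by
  rw [exclDirichlet_eq hf]
  exact finsum_nonneg fun z => cycEnergy_nonneg f z

/-- **Graded sector bound for the degree-preserving part of the TASEP generator:**
there is a universal `C` such that for `n = m + 1 ≥ 2` and all finitely supported
`f, g : ℤ₊^m → ℝ`, `(Σ_y g(y)(Tf)(y))² ≤ C n² 𝓔_m(f) 𝓔_m(g)`; in particular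
`⟨Tf, (λ - S₀)⁻¹ Tf⟩ ≤ C n² ⟨f, (λ - S₀) f⟩` for every `λ > 0`. -/
theorem graded_sector_bound_degree_preserving :
    ∃ C : ℝ, ∀ m : ℕ, 1 ≤ m →
      ∀ f g : (Fin m → ℕ) → ℝ,
        (Function.support f).Finite → (Function.support g).Finite →
        ((∑ᶠ y : Fin m → ℕ, g y * TauOp m f y) ^ 2
            ≤ C * ((m : ℝ) + 1) ^ 2 * exclDirichlet m f * exclDirichlet m g) ∧
        (∀ lam : ℝ, 0 < lam →
          2 * (∑ᶠ y : Fin m → ℕ, TauOp m f y * g y)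
              - (lam * ∑ᶠ y : Fin m → ℕ, (g y) ^ 2 + exclDirichlet m g)
            ≤ C * ((m : ℝ) + 1) ^ 2 *
                (lam * ∑ᶠ y : Fin m → ℕ, (f y) ^ 2 + exclDirichlet m f)) := by
  refine ⟨1, fun m hm f g hf hg => ?_⟩
  have key := pairing_sq_le hf hg
  refine ⟨by simpa only [one_mul] using key, fun lam hlam => ?_⟩
  have hEf := exclDirichlet_nonneg hf
  have hEg := exclDirichlet_nonneg hg
  have hnf : 0 ≤ lam * ∑ᶠ y : Fin m → ℕ, (f y) ^ 2 :=
    mul_nonneg hlam.le (finsum_nonneg fun _ => sq_nonneg _)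
  have hng : 0 ≤ lam * ∑ᶠ y : Fin m → ℕ, (g y) ^ 2 :=
    mul_nonneg hlam.le (finsum_nonneg fun _ => sq_nonneg _)
  have hcomm : ∑ᶠ y : Fin m → ℕ, TauOp m f y * g y = ∑ᶠ y : Fin m → ℕ, g y * TauOp m f y :=
    finsum_congr fun y => mul_comm _ _
  rw [hcomm]
  set X := ∑ᶠ y : Fin m → ℕ, g y * TauOp m f y
  set A := ((m : ℝ) + 1) ^ 2 * exclDirichlet m f with hA
  have hA0 : 0 ≤ A := by positivity
  -- AM-GM: `(2X)² ≤ 4 A 𝓔(g) ≤ (A + 𝓔(g))²`.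
  have hX : 2 * X ≤ A + exclDirichlet m g := by
    refine le_of_sq_le_sq ?_ (by positivity)
    nlinarith [sq_nonneg (A - exclDirichlet m g)]
  have hn : 0 ≤ ((m : ℝ) + 1) ^ 2 * (lam * ∑ᶠ y : Fin m → ℕ, (f y) ^ 2) := by positivity
  rw [one_mul, mul_add, ← hA]
  linarith
end

section
/- There exists a universal constant C < ∞ such that the following holds. Let g₁ : ℤ → ℝ be finitely supported, define G₁ : ℤ₊² → ℝ by G₁(x₁,x₂) = g₁(x₁ − x₂) if x₁ = 0 or x₂ = 0, and G₁(x₁,x₂) = 0 otherwise, and define g̃₁ : ℤ² → ℝ by g̃₁(x₁,x₂) = g₁(x₁) if x₂ = 0 and 0 otherwise. Then for every λ > 0: sup over finitely supported q : ℤ₊² → ℝ of [ 2⟨G₁, q⟩ − λ Σ q² − 𝓔₂(q) ] ≤ C · sup over finitely supported q̃ : ℤ² → ℝ of [ 2⟨g̃₁, q̃⟩ − λ Σ q̃² − 𝓓₂(q̃) ]. Equivalently, ⟨G₁, (λ − S₀)⁻¹ G₁⟩ ≤ C ⟨g̃₁, (λ − Δ)⁻¹ g̃₁⟩, where S₀ is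 the generator with Dirichlet form 𝓔₂ on ℤ₊² and Δ is the lattice Laplacian on ℤ². -/
/-- The boundary function `G₁(x₁,x₂) = g₁(x₁-x₂) 1_{x₁ = 0 ∨ x₂ = 0}` on `ℤ₊²`. -/
noncomputable def foldSrc (g₁ : ℤ → ℝ) (y : Fin 2 → ℕ) : ℝ :=
  if y 0 = 0 ∨ y 1 = 0 then g₁ ((y 0 : ℤ) - (y 1 : ℤ)) else 0

/-- The folded-out function `g̃₁(x₁,x₂) = g₁(x₁) 1_{x₂ = 0}` on `ℤ²`. -/
noncomputable def foldTgt (g₁ : ℤ → ℝ) (x : Fin 2 → ℤ) : ℝ :=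
  if x 1 = 0 then g₁ (x 0) else 0

/-! ### The folding map and local energies -/

/-- The folding map `ℤ² → ℤ₊²`, `(z, w) ↦ (|w| + z⁺, |w| + z⁻)`. On `w ≥ 0` it is the inverse of
`(x, y) ↦ (x - y, min x y)`. -/
def foldMap (x : Fin 2 → ℤ) : Fin 2 → ℕ :=
  ![(x 1).natAbs + (x 0).toNat, (x 1).natAbs + (-x 0).toNat]

/-- The summand of the exclusion Dirichlet form: total squared increment of `q` over the moves
allowed at `y`. -/
noncomputable def localEnergy (q : (Fin 2 → ℕ) → ℝ) (y : Fin 2 → ℕ) : ℝ :=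
  ∑ j : Fin 3, ∑ ε ∈ ({1, -1} : Finset ℤ),
    (if okMove (ε • stepVec 2 j) y then (q (moveTo (ε • stepVec 2 j) y) - q y) ^ 2 else 0)

lemma exclDirichlet_eq_s12 (q : (Fin 2 → ℕ) → ℝ) :
    exclDirichlet 2 q = (1 / 2) * ∑ᶠ y, localEnergy q y := rfl

lemma localEnergy_nonneg (q : (Fin 2 → ℕ) → ℝ) (y : Fin 2 → ℕ) : 0 ≤ localEnergy q y :=
  Finset.sum_nonneg fun _ _ => Finset.sum_nonneg fun _ _ => by split_ifs <;> positivity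

lemma sq_le_localEnergy_s12 (q : (Fin 2 → ℕ) → ℝ) (y : Fin 2 → ℕ) (j : Fin 3) (ε : ℤ)
    (hε : ε = 1 ∨ ε = -1) (y' : Fin 2 → ℕ) (h : ∀ i, (y' i : ℤ) = y i + (ε • stepVec 2 j) i) :
    (q y' - q y) ^ 2 ≤ localEnergy q y := by
  have hok : okMove (ε • stepVec 2 j) y := fun i => by rw [← h i]; positivity
  have hmv : moveTo (ε • stepVec 2 j) y = y' := by
    funext i
    simp only [moveTo]
    rw [← h i]
    simp
  have hnn : ∀ (j : Fin 3) (ε : ℤ), 0 ≤ (if okMove (ε • stepVec 2 j) y then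
      (q (moveTo (ε • stepVec 2 j) y) - q y) ^ 2 else 0) := by
    intro j ε
    split_ifs <;> positivity
  have h1 := Finset.single_le_sum (f := fun j : Fin 3 => ∑ ε ∈ ({1, -1} : Finset ℤ),
      (if okMove (ε • stepVec 2 j) y then (q (moveTo (ε • stepVec 2 j) y) - q y) ^ 2 else 0))
    (fun j _ => Finset.sum_nonneg fun ε _ => hnn j ε) (Finset.mem_univ j)
  have h2 := Finset.single_le_sum (s := ({1, -1} : Finset ℤ)) (f := fun ε : ℤ =>
      (if okMove (ε • stepVec 2 j) y then (q (moveTo (ε • stepVec 2 j) y) - q y) ^ 2 else 0))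
    (fun ε _ => hnn j ε) (a := ε) (by simpa using hε)
  rw [if_pos hok, hmv] at h2
  exact h2.trans h1

lemma stepVec_le_one (j : Fin 3) (ε : ℤ) (hε : ε ∈ ({1, -1} : Finset ℤ)) (i : Fin 2) :
    -1 ≤ (ε • stepVec 2 j) i := by
  have hε' : ε = 1 ∨ ε = -1 := by simpa using hε
  rcases hε' with rfl | rfl <;> simp only [stepVec, Pi.smul_apply, smul_eq_mul] <;>
    split_ifs <;> simp

lemma finite_support_localEnergy_s12 (q : (Fin 2 → ℕ) → ℝ) (hq : (Function.support q).Finite) :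
    (Function.support (localEnergy q)).Finite := by
  obtain ⟨b, hb⟩ := hq.bddAbove
  refine (Set.finite_Icc (0 : Fin 2 → ℕ) (b + 1)).subset fun y hy => ⟨fun i => by simp, ?_⟩
  by_contra hyb
  obtain ⟨i, hi⟩ : ∃ i, b i + 1 < y i := by
    simpa only [Pi.le_def, not_forall, not_le, Pi.add_apply, Pi.one_apply] using hyb
  have hz : ∀ y' : Fin 2 → ℕ, b i < y' i → q y' = 0 := by
    intro y' h'
    by_contra h0
    exact absurd (hb h0 i) (not_le.mpr h')
  apply hy
  refine Finset.sum_eq_zero fun j _ => Finset.sum_eq_zero fun ε hε => ?_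
  have hs := stepVec_le_one j ε hε i
  rw [hz y (by omega), hz (moveTo (ε • stepVec 2 j) y) (by simp only [moveTo]; omega)]
  simp

lemma summable_of_support_finite {α : Type*} {f : α → ℝ} (h : (Function.support f).Finite) :
    Summable f := summable_of_hasFiniteSupport h

lemma tsum_eq_finsum_of_finite {α : Type*} {f : α → ℝ} (h : (Function.support f).Finite) :
    ∑' a, f a = ∑ᶠ a, f a := tsum_eq_finsum h

/-- A point is determined by its fold and by the half plane it lies in. -/
lemma foldMap_injective :
    Function.Injective fun x : Fin 2 → ℤ => (foldMap x, decide (0 ≤ x 1)) := by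
  intro x x' h
  simp only [Prod.mk.injEq, decide_eq_decide] at h
  obtain ⟨h1, h2⟩ := h
  have a := congrFun h1 0
  have b := congrFun h1 1
  simp only [foldMap, Matrix.cons_val_zero, Matrix.cons_val_one] at a b
  funext i
  fin_cases i <;> simp only [Fin.zero_eta, Fin.mk_one] <;> omega

lemma finite_support_comp_foldMap {e : (Fin 2 → ℕ) → ℝ} (he : (Function.support e).Finite) :
    (Function.support fun x => e (foldMap x)).Finite := by
  refine ((he.prod (Set.finite_univ (α := Bool))).preimage
    foldMap_injective.injOn).subset fun x hx => ?_
  exact ⟨hx, trivial⟩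

lemma finsum_comp_foldMap_le {e : (Fin 2 → ℕ) → ℝ} (he : (Function.support e).Finite)
    (h0 : ∀ y, 0 ≤ e y) : ∑ᶠ x, e (foldMap x) ≤ 2 * ∑ᶠ y, e y := by
  have hE : Summable e := summable_of_support_finite he
  have hP : HasSum (fun p : (Fin 2 → ℕ) × Bool => e p.1) (2 * ∑' y, e y) := by
    have hs : (Function.support fun p : (Fin 2 → ℕ) × Bool => e p.1).Finite :=
      (he.prod (Set.finite_univ (α := Bool))).subset fun p hp => ⟨hp, trivial⟩
    have hS : Summable fun p : (Fin 2 → ℕ) × Bool => e p.1 := summable_of_support_finite hs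
    convert hS.hasSum using 1
    rw [hS.tsum_prod, ← tsum_mul_left]
    exact tsum_congr fun y => by simp [two_mul]
  rw [← tsum_eq_finsum_of_finite he, ← tsum_eq_finsum_of_finite (finite_support_comp_foldMap he), ← hP.tsum_eq]
  exact Summable.tsum_le_tsum_of_inj _ foldMap_injective (fun p _ => h0 p.1)
    (fun _ => le_rfl) (summable_of_support_finite (finite_support_comp_foldMap he)) hP.summable

/-! ### Comparison of the Dirichlet forms -/

/-- The horizontal edge at `(z, w)` folds onto a move `+e₁` if `z ≥ 0` and `-e₂` if `z < 0`. -/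
lemma horizontal_le (q : (Fin 2 → ℕ) → ℝ) (x : Fin 2 → ℤ) :
    (q (foldMap (x + Pi.single 0 1)) - q (foldMap x)) ^ 2 ≤ localEnergy q (foldMap x) := by
  rcases le_or_gt 0 (x 0) with h | h
  · refine sq_le_localEnergy_s12 q _ 0 1 (Or.inl rfl) _ fun i => ?_
    fin_cases i <;> simp [foldMap, stepVec, -Nat.cast_natAbs] <;> omega
  · refine sq_le_localEnergy_s12 q _ 2 1 (Or.inl rfl) _ fun i => ?_
    fin_cases i <;> simp [foldMap, stepVec, -Nat.cast_natAbs] <;> omega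

/-- A vertical edge folds onto a diagonal `(a, b), (a+1, b+1)`; both ends are one move away from
`(a+1, b)`. -/
lemma vertical_le (q : (Fin 2 → ℕ) → ℝ) (x : Fin 2 → ℤ) :
    (q (foldMap (x + Pi.single 1 1)) - q (foldMap x)) ^ 2 ≤
      2 * localEnergy q (foldMap x) + 2 * localEnergy q (foldMap (x + Pi.single 1 1)) := by
  have key : ∀ m, (q m - q (foldMap x)) ^ 2 ≤ localEnergy q (foldMap x) →
      (q m - q (foldMap (x + Pi.single 1 1))) ^ 2 ≤ localEnergy q (foldMap (x + Pi.single 1 1)) →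
      (q (foldMap (x + Pi.single 1 1)) - q (foldMap x)) ^ 2 ≤
        2 * localEnergy q (foldMap x) + 2 * localEnergy q (foldMap (x + Pi.single 1 1)) := by
    intro m h1 h2
    nlinarith [sq_nonneg ((q m - q (foldMap x)) + (q m - q (foldMap (x + Pi.single 1 1))))]
  rcases le_or_gt 0 (x 1) with h | h
  · apply key ![foldMap x 0 + 1, foldMap x 1]
    · refine sq_le_localEnergy_s12 q _ 0 1 (Or.inl rfl) _ fun i => ?_
      fin_cases i <;> simp [foldMap, stepVec]
    · refine sq_le_localEnergy_s12 q _ 2 1 (Or.inl rfl) _ fun i => ?_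
      fin_cases i <;> simp [foldMap, stepVec, -Nat.cast_natAbs] <;> omega
  · apply key ![foldMap (x + Pi.single 1 1) 0 + 1, foldMap (x + Pi.single 1 1) 1]
    · refine sq_le_localEnergy_s12 q _ 2 1 (Or.inl rfl) _ fun i => ?_
      fin_cases i <;> simp [foldMap, stepVec, -Nat.cast_natAbs] <;> omega
    · refine sq_le_localEnergy_s12 q _ 0 1 (Or.inl rfl) _ fun i => ?_
      fin_cases i <;> simp [foldMap, stepVec]

/-- Each lattice point contributes at most `5` local energies after shifting, fibres of `foldMap`
have at most two points, and `∑ localEnergy = 2 * exclDirichlet`; hence `5 * 2 * 2 = 20`. -/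
lemma latticeDirichlet_comp_foldMap_le (q : (Fin 2 → ℕ) → ℝ) (hq : (Function.support q).Finite) :
    latticeDirichlet 2 (fun x => q (foldMap x)) ≤ 20 * exclDirichlet 2 q := by
  have hE := finite_support_localEnergy_s12 q hq
  have hF := finite_support_comp_foldMap hE
  have hF' : (Function.support fun x : Fin 2 → ℤ =>
      localEnergy q (foldMap (x + Pi.single (1 : Fin 2) (1 : ℤ)))).Finite :=
    hF.preimage (add_left_injective (Pi.single (1 : Fin 2) (1 : ℤ) : Fin 2 → ℤ)).injOn
  have hS := summable_of_support_finite hF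
  have hS' := summable_of_support_finite hF'
  have hle : ∀ x : Fin 2 → ℤ,
      ∑ i : Fin 2, (q (foldMap (x + Pi.single i 1)) - q (foldMap x)) ^ 2 ≤
        3 * localEnergy q (foldMap x) + 2 * localEnergy q (foldMap (x + Pi.single 1 1)) := by
    intro x
    rw [Fin.sum_univ_two]
    linarith [horizontal_le q x, vertical_le q x]
  have h0 : ∀ x : Fin 2 → ℤ,
      0 ≤ ∑ i : Fin 2, (q (foldMap (x + Pi.single i 1)) - q (foldMap x)) ^ 2 :=
    fun x => Finset.sum_nonneg fun _ _ => sq_nonneg _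
  have hD : (Function.support fun x : Fin 2 → ℤ =>
      ∑ i : Fin 2, (q (foldMap (x + Pi.single i 1)) - q (foldMap x)) ^ 2).Finite := by
    refine (hF.union hF').subset fun x hx => ?_
    by_contra hn
    simp only [Set.mem_union, Function.mem_support, not_or, not_not] at hn
    have := hle x
    rw [hn.1, hn.2] at this
    exact hx (le_antisymm (by simpa using this) (h0 x))
  have hshift : ∑' x : Fin 2 → ℤ, localEnergy q (foldMap (x + Pi.single (1 : Fin 2) (1 : ℤ))) =
      ∑' x, localEnergy q (foldMap x) :=
    (Equiv.addRight (Pi.single (1 : Fin 2) (1 : ℤ) : Fin 2 → ℤ)).tsum_eq fun x => localEnergy q (foldMap x)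
  have hmain := (summable_of_support_finite hD).tsum_le_tsum hle
    ((hS.mul_left 3).add (hS'.mul_left 2))
  rw [(hS.mul_left 3).tsum_add (hS'.mul_left 2), tsum_mul_left, tsum_mul_left, hshift,
    tsum_eq_finsum_of_finite hD, tsum_eq_finsum_of_finite hF] at hmain
  have h2 := finsum_comp_foldMap_le hE (localEnergy_nonneg q)
  rw [exclDirichlet_eq_s12]
  unfold latticeDirichlet
  linarith

/-! ### Pairing with the source, and boundedness of the lattice functional -/

lemma finite_support_foldTgt {g : ℤ → ℝ} (hg : (Function.support g).Finite) :
    (Function.support (foldTgt g)).Finite := by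
  refine (hg.image fun z => ![z, 0]).subset fun x hx => ?_
  simp only [foldTgt, Function.mem_support, ne_eq, ite_eq_right_iff, not_forall] at hx
  obtain ⟨h1, h2⟩ := hx
  refine ⟨x 0, h2, ?_⟩
  funext i
  fin_cases i <;> simp [h1]

/-- Both pairings equal `∑ g₁ z * q (foldMap (z, 0))` over `z : ℤ`. -/
lemma pairing_comp_foldMap (g : ℤ → ℝ) (hg : (Function.support g).Finite)
    (q : (Fin 2 → ℕ) → ℝ) (hq : (Function.support q).Finite) :
    ∑ᶠ x, foldTgt g x * q (foldMap x) = ∑ᶠ y, foldSrc g y * q y := by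
  have hA : (Function.support fun x => foldTgt g x * q (foldMap x)).Finite :=
    (finite_support_foldTgt hg).subset (Function.support_mul_subset_left _ _)
  have hB : (Function.support fun y => foldSrc g y * q y).Finite :=
    hq.subset (Function.support_mul_subset_right _ _)
  rw [← tsum_eq_finsum_of_finite hA, ← tsum_eq_finsum_of_finite hB]
  have i1 : Function.Injective fun z : ℤ => (![z, 0] : Fin 2 → ℤ) := fun a b h => by
    simpa using congrFun h 0
  have i2 : Function.Injective fun z : ℤ => foldMap ![z, 0] := fun a b h => by
    have h0 := congrFun h 0
    have h1 := congrFun h 1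
    simp [foldMap] at h0 h1
    omega
  rw [← i1.tsum_eq, ← i2.tsum_eq]
  · refine tsum_congr fun z => ?_
    have hz : foldMap ![z, 0] 0 = 0 ∨ foldMap ![z, 0] 1 = 0 := by
      simp [foldMap]
      omega
    have hd : ((foldMap ![z, 0] 0 : ℕ) : ℤ) - (foldMap ![z, 0] 1 : ℕ) = z := by
      simp [foldMap]
    rw [foldSrc, if_pos hz, hd]
    simp [foldTgt]
  · intro y hy
    have hy' : y 0 = 0 ∨ y 1 = 0 := by
      by_contra hn
      exact hy (by simp [foldSrc, hn])
    refine ⟨(y 0 : ℤ) - y 1, ?_⟩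
    funext i
    fin_cases i <;> simp [foldMap] <;> omega
  · intro x hx
    have hx' : x 1 = 0 := by
      by_contra hn
      exact hx (by simp [foldTgt, hn])
    refine ⟨x 0, ?_⟩
    funext i
    fin_cases i <;> simp [hx']

lemma latticeDirichlet_smul (c : ℝ) (f : (Fin 2 → ℤ) → ℝ) :
    latticeDirichlet 2 (fun x => c * f x) = c ^ 2 * latticeDirichlet 2 f := by
  unfold latticeDirichlet
  rw [← smul_eq_mul, smul_finsum]
  refine finsum_congr fun x => ?_
  rw [smul_eq_mul, Finset.mul_sum]
  exact Finset.sum_congr rfl fun i _ => by ring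

/-- Drop the nonnegative Dirichlet form and complete the square pointwise:
`2 G f - λ f² ≤ G² / λ`. -/
lemma lattice_functional_le (G : (Fin 2 → ℤ) → ℝ) (hG : (Function.support G).Finite) (lam : ℝ)
    (hl : 0 < lam) (f : (Fin 2 → ℤ) → ℝ) (hf : (Function.support f).Finite) :
    2 * (∑ᶠ x, G x * f x) - lam * ∑ᶠ x, (f x) ^ 2 - latticeDirichlet 2 f ≤
      ∑ᶠ x, (G x) ^ 2 / lam := by
  have hD : 0 ≤ latticeDirichlet 2 f :=
    finsum_nonneg fun x => Finset.sum_nonneg fun _ _ => sq_nonneg _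
  have h1 : (Function.support fun x => G x * f x).Finite :=
    hG.subset (Function.support_mul_subset_left _ _)
  have h2 : (Function.support fun x => (f x) ^ 2).Finite := hf.subset fun x hx => by
    intro h
    exact hx (by simp [h])
  have h3 : (Function.support fun x => (G x) ^ 2 / lam).Finite := hG.subset fun x hx => by
    intro h
    exact hx (by simp [h])
  have s1 := summable_of_support_finite h1
  have s2 := summable_of_support_finite h2
  have s3 := summable_of_support_finite h3
  have hp : ∀ x, 2 * (G x * f x) ≤ lam * (f x) ^ 2 + (G x) ^ 2 / lam := by
    intro x
    have h : lam * (f x) ^ 2 + (G x) ^ 2 / lam - 2 * (G x * f x) =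
        (lam * f x - G x) ^ 2 / lam := by
      field_simp
      ring
    have : 0 ≤ (lam * f x - G x) ^ 2 / lam := by positivity
    linarith
  have hm := (s1.mul_left 2).tsum_le_tsum hp ((s2.mul_left lam).add s3)
  rw [(s2.mul_left lam).tsum_add s3, tsum_mul_left, tsum_mul_left, tsum_eq_finsum_of_finite h1,
    tsum_eq_finsum_of_finite h2, tsum_eq_finsum_of_finite h3] at hm
  linarith

/-- **Foldout lemma, part 1:** the `H₋₁(λ)` norm of `G₁` for the hard-core exclusion
dynamics on `ℤ₊²` is bounded by `C` times the `H₋₁(λ)` norm of `g̃₁` for the free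
lattice Laplacian on `ℤ²`, uniformly in `λ > 0`; both norms are expressed through
their variational formulas. -/
theorem foldout_lemma_part_one :
    ∃ C : ℝ, 0 < C ∧
      ∀ g₁ : ℤ → ℝ, (Function.support g₁).Finite →
        ∀ lam : ℝ, 0 < lam →
          ∀ q : (Fin 2 → ℕ) → ℝ, (Function.support q).Finite →
            2 * (∑ᶠ y : Fin 2 → ℕ, foldSrc g₁ y * q y)
                - lam * ∑ᶠ y : Fin 2 → ℕ, (q y) ^ 2 - exclDirichlet 2 q
              ≤ C * sSup {r : ℝ | ∃ qt : (Fin 2 → ℤ) → ℝ, (Function.support qt).Finite ∧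
                  r = 2 * (∑ᶠ x : Fin 2 → ℤ, foldTgt g₁ x * qt x)
                        - lam * ∑ᶠ x : Fin 2 → ℤ, (qt x) ^ 2 - latticeDirichlet 2 qt} := by
  refine ⟨20, by norm_num, fun g hg lam hl q hq => ?_⟩
  set qt : (Fin 2 → ℤ) → ℝ := fun x => 20⁻¹ * q (foldMap x) with hqt
  have hsupp : (Function.support qt).Finite :=
    (finite_support_comp_foldMap hq).subset (Function.support_mul_subset_right _ _)
  have hq2 : (Function.support fun y => (q y) ^ 2).Finite := hq.subset fun y hy h =>
    hy (by simp [h])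
  have hsq : ∑ᶠ x, (q (foldMap x)) ^ 2 ≤ 2 * ∑ᶠ y, (q y) ^ 2 :=
    finsum_comp_foldMap_le hq2 fun y => sq_nonneg _
  have hnn : 0 ≤ ∑ᶠ y, (q y) ^ 2 := finsum_nonneg fun y => sq_nonneg _
  have hpair : ∑ᶠ x, foldTgt g x * qt x = 20⁻¹ * ∑ᶠ y, foldSrc g y * q y := by
    rw [← pairing_comp_foldMap g hg q hq, ← smul_eq_mul, smul_finsum]
    exact finsum_congr fun x => by simp only [hqt, smul_eq_mul]; ring
  have hnorm : ∑ᶠ x, (qt x) ^ 2 = (20⁻¹) ^ 2 * ∑ᶠ x, (q (foldMap x)) ^ 2 := by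
    rw [← smul_eq_mul, smul_finsum]
    exact finsum_congr fun x => by simp only [hqt, smul_eq_mul]; ring
  have hdir := latticeDirichlet_comp_foldMap_le q hq
  have hbdd : BddAbove {r : ℝ | ∃ qt : (Fin 2 → ℤ) → ℝ, (Function.support qt).Finite ∧
      r = 2 * (∑ᶠ x : Fin 2 → ℤ, foldTgt g x * qt x)
        - lam * ∑ᶠ x : Fin 2 → ℤ, (qt x) ^ 2 - latticeDirichlet 2 qt} := by
    refine ⟨∑ᶠ x, (foldTgt g x) ^ 2 / lam, ?_⟩
    rintro r ⟨f, hf, rfl⟩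
    exact lattice_functional_le _ (finite_support_foldTgt hg) lam hl f hf
  have hle := le_csSup hbdd ⟨qt, hsupp, rfl⟩
  rw [hpair, hnorm, hqt, latticeDirichlet_smul] at hle
  have hlsq := mul_le_mul_of_nonneg_left hsq hl.le
  have hlnn := mul_nonneg hl.le hnn
  linarith
end

section
/- There exists a universal constant C < ∞ such that for every λ > 0 and every finitely supported f : ℤ₊ → ℝ, one has λ · Σ_{y ∈ ℤ₊} f(y)² + 𝓔₁(f) ≤ C · ∫_{−π}^{π} (λ + t²) |F̂(t)|² dt, where F : ℤ → ℝ is the extension F(x) = f(x) for x ≥ 0 and F(x) = f(−x−1) for x < 0, and F̂(t) = Σ_{x ∈ ℤ} F(x) e^{itx}. -/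
/-!
By Parseval on the circle, `∫ |F̂|² = 2π Σ F²`. The discrete gradient `x ↦ F (x + 1) - F x` has
Fourier transform `(e^{-it} - 1) F̂(t)`, and `|e^{-it} - 1| ≤ |t|`, so
`∫ t² |F̂|² ≥ 2π Σ (F (x + 1) - F x)²`. The reflection gives `F (-1) = F 0`, hence the bond across
the reflection point carries no energy: `Σ F² = 2 Σ f²` and `Σ (F (x + 1) - F x)² = 𝓔₁(f)`.
The inequality follows with the constant `1 / (2π)`.
-/

/-- The one-gap exclusion Dirichlet form `𝓔₁(f) = 2 Σ_{y ∈ ℤ₊} (f(y+1) - f(y))²`. -/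
noncomputable def exclDirichletOne (f : ℕ → ℝ) : ℝ :=
  2 * ∑ᶠ y : ℕ, (f (y + 1) - f y) ^ 2

/-- The symmetric extension `F(x) = f(x)` for `x ≥ 0`, `F(x) = f(-x-1)` for `x < 0`. -/
noncomputable def symmExt (f : ℕ → ℝ) (x : ℤ) : ℝ :=
  if 0 ≤ x then f x.toNat else f (-x - 1).toNat

/-- The Fourier transform `F̂(t) = Σ_{x ∈ ℤ} F(x) e^{itx}` of a finitely supported
function on `ℤ`. -/
noncomputable def fourierZ (F : ℤ → ℝ) (t : ℝ) : ℂ :=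
  ∑ᶠ x : ℤ, (F x : ℂ) * Complex.exp (Complex.I * (t : ℂ) * (x : ℂ))

lemma fourierZ_eq_sum {F : ℤ → ℝ} {s : Finset ℤ} (hs : Function.support F ⊆ s) (t : ℝ) :
    fourierZ F t = ∑ x ∈ s, (F x : ℂ) * Complex.exp (Complex.I * (t : ℂ) * (x : ℂ)) := by
  refine finsum_eq_sum_of_support_subset _ fun x hx => hs ?_
  intro h
  exact hx (by simp [h])

lemma continuous_fourierZ {F : ℤ → ℝ} (hF : (Function.support F).Finite) :
    Continuous (fourierZ F) := by
  have : fourierZ F = fun t : ℝ => ∑ x ∈ hF.toFinset,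
      (F x : ℂ) * Complex.exp (Complex.I * (t : ℂ) * (x : ℂ)) :=
    funext (fourierZ_eq_sum (by simp))
  rw [this]
  fun_prop

/-- Orthogonality of the characters of the circle. -/
lemma integral_exp_int (n : ℤ) :
    ∫ t in (-Real.pi)..Real.pi, Complex.exp (Complex.I * (t : ℂ) * (n : ℂ))
      = if n = 0 then (2 * Real.pi : ℂ) else 0 := by
  split_ifs with h
  · subst h
    simp
    ring
  · have hc : (Complex.I * n : ℂ) ≠ 0 := by simp [h]
    have hrw : ∀ t : ℝ, Complex.exp (Complex.I * (t : ℂ) * (n : ℂ))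
        = Complex.exp ((Complex.I * n) * t) := fun t => by ring_nf
    simp_rw [hrw]
    rw [integral_exp_mul_complex hc, div_eq_zero_iff]
    left
    -- The endpoints differ by the period `2πi n` of the exponential.
    rw [sub_eq_zero, Complex.exp_eq_exp_iff_exists_int]
    exact ⟨n, by push_cast; ring⟩

/-- Parseval's identity for finitely supported real sequences. -/
lemma parseval_fourierZ {F : ℤ → ℝ} (hF : (Function.support F).Finite) :
    ∫ t in (-Real.pi)..Real.pi, ‖fourierZ F t‖ ^ 2 = 2 * Real.pi * ∑ᶠ x : ℤ, (F x) ^ 2 := by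
  set s := hF.toFinset with hs
  have hsum : ∑ᶠ x : ℤ, (F x) ^ 2 = ∑ x ∈ s, (F x) ^ 2 := by
    refine finsum_eq_sum_of_support_subset _ fun x hx => ?_
    simpa [hs] using hx
  have hexp : ∀ t : ℝ, ((‖fourierZ F t‖ ^ 2 : ℝ) : ℂ) = ∑ x ∈ s, ∑ y ∈ s,
      ((F x : ℂ) * F y) * Complex.exp (Complex.I * (t : ℂ) * ((x - y : ℤ) : ℂ)) := by
    intro t
    rw [Complex.ofReal_pow, ← Complex.mul_conj', fourierZ_eq_sum (s := s) (by simp [hs]), map_sum,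
      Finset.sum_mul_sum]
    refine Finset.sum_congr rfl fun x _ => Finset.sum_congr rfl fun y _ => ?_
    have h2 : (starRingEnd ℂ) (Complex.exp (Complex.I * (t : ℂ) * (y : ℂ)))
        = Complex.exp (-(Complex.I * (t : ℂ) * (y : ℂ))) := by
      rw [← Complex.exp_conj]
      simp
    rw [map_mul, h2, Complex.conj_ofReal, mul_mul_mul_comm, ← Complex.exp_add]
    push_cast
    ring_nf
  apply Complex.ofReal_injective
  rw [← intervalIntegral.integral_ofReal]
  simp_rw [hexp]
  rw [intervalIntegral.integral_finsetSum
    (fun x _ => Continuous.intervalIntegrable (by fun_prop) _ _)]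
  have hin : ∀ x ∈ s, ∫ t in (-Real.pi)..Real.pi, ∑ y ∈ s,
      ((F x : ℂ) * F y) * Complex.exp (Complex.I * (t : ℂ) * ((x - y : ℤ) : ℂ))
      = 2 * Real.pi * (F x : ℂ) ^ 2 := by
    intro x hx
    rw [intervalIntegral.integral_finsetSum
      (fun y _ => Continuous.intervalIntegrable (by fun_prop) _ _)]
    simp_rw [intervalIntegral.integral_const_mul, integral_exp_int, sub_eq_zero]
    simp only [mul_ite, mul_zero, Finset.sum_ite_eq, hx, if_true]
    ring
  rw [Finset.sum_congr rfl hin, hsum, ← Finset.mul_sum]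
  push_cast
  ring

lemma fourierZ_gradient {F : ℤ → ℝ} (hF : (Function.support F).Finite) (t : ℝ) :
    fourierZ (fun x => F (x + 1) - F x) t
      = (Complex.exp (Complex.I * ((-t : ℝ) : ℂ)) - 1) * fourierZ F t := by
  set g : ℤ → ℂ := fun x => (F x : ℂ) * Complex.exp (Complex.I * (t : ℂ) * (x : ℂ)) with hg
  have hgs : (Function.support g).Finite := hF.subset fun x hx h => hx (by simp [hg, h])
  have hgs' : (Function.support fun x => g (x + 1)).Finite :=
    hgs.preimage (f := fun x : ℤ => x + 1) (add_left_injective 1).injOn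
  have hshift : ∑ᶠ x : ℤ, g (x + 1) = ∑ᶠ x : ℤ, g x := finsum_comp_equiv (Equiv.addRight (1 : ℤ))
  have hpt : ∀ x : ℤ, ((F (x + 1) - F x : ℝ) : ℂ) * Complex.exp (Complex.I * (t : ℂ) * (x : ℂ))
      = Complex.exp (Complex.I * ((-t : ℝ) : ℂ)) * g (x + 1) - g x := by
    intro x
    have he : Complex.exp (Complex.I * (t : ℂ) * (x : ℂ))
        = Complex.exp (Complex.I * ((-t : ℝ) : ℂ))
          * Complex.exp (Complex.I * (t : ℂ) * ((x + 1 : ℤ) : ℂ)) := by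
      rw [← Complex.exp_add]
      push_cast
      ring_nf
    simp only [hg]
    rw [Complex.ofReal_sub, sub_mul]
    congr 1
    rw [he]
    ring
  have hFg : fourierZ F t = ∑ᶠ x : ℤ, g x := rfl
  unfold fourierZ at hFg ⊢
  simp_rw [hpt]
  rw [finsum_sub_distrib (hgs'.subset fun x hx h => hx (by simp [h])) hgs,
    ← mul_finsum _, hshift, hFg]
  ring

lemma symmExt_natCast (f : ℕ → ℝ) (n : ℕ) : symmExt f n = f n := by
  simp [symmExt]

lemma symmExt_neg (f : ℕ → ℝ) (n : ℕ) : symmExt f (-((n : ℤ) + 1)) = f n := by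
  have h : ¬ (0 : ℤ) ≤ -((n : ℤ) + 1) := by omega
  have h' : (-(-((n : ℤ) + 1)) - 1).toNat = n := by omega
  rw [symmExt, if_neg h, h']

lemma support_symmExt_finite {f : ℕ → ℝ} (hf : (Function.support f).Finite) :
    (Function.support (symmExt f)).Finite := by
  refine ((hf.image fun n : ℕ => (n : ℤ)).union
    (hf.image fun n : ℕ => -((n : ℤ) + 1))).subset fun x hx => ?_
  by_cases h : 0 ≤ x
  · obtain ⟨n, rfl⟩ := Int.eq_ofNat_of_zero_le h
    exact Or.inl ⟨n, by simpa [symmExt_natCast] using hx, rfl⟩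
  · obtain ⟨n, rfl⟩ : ∃ n : ℕ, x = -((n : ℤ) + 1) := ⟨(-x - 1).toNat, by omega⟩
    exact Or.inr ⟨n, by rwa [Function.mem_support, symmExt_neg] at hx, rfl⟩

lemma support_gradient_finite {f : ℕ → ℝ} (hf : (Function.support f).Finite) :
    (Function.support fun y => f (y + 1) - f y).Finite := by
  refine ((hf.preimage (f := fun y : ℕ => y + 1) (add_left_injective 1).injOn).union hf).subset
    fun x hx => ?_
  by_contra h
  simp only [Set.mem_union, Set.mem_preimage, Function.mem_support, not_or, not_not] at h
  exact hx (by simp [h.1, h.2])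

lemma support_gradient_int_finite {F : ℤ → ℝ} (hF : (Function.support F).Finite) :
    (Function.support fun x => F (x + 1) - F x).Finite := by
  refine ((hF.preimage (f := fun x : ℤ => x + 1) (add_left_injective 1).injOn).union hF).subset
    fun x hx => ?_
  by_contra h
  simp only [Set.mem_union, Set.mem_preimage, Function.mem_support, not_or, not_not] at h
  exact hx (by simp [h.1, h.2])

lemma hasSum_finsum_sq {ι : Type*} {g : ι → ℝ} (hg : (Function.support g).Finite) :
    HasSum (fun i => g i ^ 2) (∑ᶠ i, g i ^ 2) := by
  have h : (Function.support fun i => g i ^ 2).Finite := by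
    simpa [Function.support_pow] using hg
  rw [← tsum_eq_finsum (L := .unconditional ι) h]
  exact (summable_of_hasFiniteSupport h).hasSum

lemma finsum_symmExt_sq {f : ℕ → ℝ} (hf : (Function.support f).Finite) :
    ∑ᶠ x : ℤ, symmExt f x ^ 2 = 2 * ∑ᶠ y : ℕ, f y ^ 2 := by
  have h := hasSum_finsum_sq hf
  have h2 : HasSum (fun x : ℤ => symmExt f x ^ 2) _ :=
    HasSum.of_nat_of_neg_add_one (by simpa only [symmExt_natCast] using h)
      (by simpa only [symmExt_neg] using h)
  rw [(hasSum_finsum_sq (support_symmExt_finite hf)).unique h2]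
  ring

/-- The reflected half-line contributes the gradient energy a second time, while the bond between
`-1` and `0` contributes nothing. -/
lemma finsum_gradient_symmExt_sq {f : ℕ → ℝ} (hf : (Function.support f).Finite) :
    ∑ᶠ x : ℤ, (symmExt f (x + 1) - symmExt f x) ^ 2 = exclDirichletOne f := by
  have h := hasSum_finsum_sq (support_gradient_finite hf)
  have hpos : HasSum (fun n : ℕ => (symmExt f ((n : ℤ) + 1) - symmExt f (n : ℤ)) ^ 2)
      (∑ᶠ y : ℕ, (f (y + 1) - f y) ^ 2) := by
    convert h using 4 with n
    · exact_mod_cast symmExt_natCast f (n + 1)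
    · exact symmExt_natCast f n
  have hneg : HasSum (fun n : ℕ => (symmExt f (-((n : ℤ) + 1) + 1)
      - symmExt f (-((n : ℤ) + 1))) ^ 2) (∑ᶠ y : ℕ, (f (y + 1) - f y) ^ 2) := by
    rw [← hasSum_nat_add_iff' 1]
    have h0 : symmExt f 0 = f 0 := symmExt_natCast f 0
    have h1 : symmExt f (-1) = f 0 := by simpa using symmExt_neg f 0
    have hs : ∀ n : ℕ, (symmExt f (-(((n + 1 : ℕ) : ℤ) + 1) + 1)
        - symmExt f (-(((n + 1 : ℕ) : ℤ) + 1))) ^ 2 = (f (n + 1) - f n) ^ 2 := by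
      intro n
      rw [symmExt_neg, show -(((n + 1 : ℕ) : ℤ) + 1) + 1 = -((n : ℤ) + 1) by push_cast; ring,
        symmExt_neg]
      ring
    simp_rw [hs]
    simpa [h0, h1] using h
  have h2 := HasSum.of_nat_of_neg_add_one
    (f := fun x : ℤ => (symmExt f (x + 1) - symmExt f x) ^ 2) hpos hneg
  rw [(hasSum_finsum_sq (support_gradient_int_finite (support_symmExt_finite hf))).unique h2,
    exclDirichletOne]
  ring

/-- **Hard-core removal, Dirichlet form bound (degree two):**
`λ‖f‖² + 𝓔₁(f) ≤ C ∫_{-π}^{π} (λ + t²)|F̂(t)|² dt`. -/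
theorem dirichlet_bound_by_fourier_energy_degree_two :
    ∃ C : ℝ, ∀ lam : ℝ, 0 < lam →
      ∀ f : ℕ → ℝ, (Function.support f).Finite →
        lam * ∑ᶠ y : ℕ, (f y) ^ 2 + exclDirichletOne f
          ≤ C * ∫ t in (-Real.pi)..Real.pi,
              (lam + t ^ 2) * ‖fourierZ (symmExt f) t‖ ^ 2 := by
  refine ⟨1 / (2 * Real.pi), fun lam hlam f hf => ?_⟩
  have hF := support_symmExt_finite hf
  have hG := support_gradient_int_finite hF
  have cF := continuous_fourierZ hF
  have cG := continuous_fourierZ hG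
  have hpi := Real.pi_pos
  have key : ∫ t in (-Real.pi)..Real.pi, (lam * ‖fourierZ (symmExt f) t‖ ^ 2
        + ‖fourierZ (fun x => symmExt f (x + 1) - symmExt f x) t‖ ^ 2)
      ≤ ∫ t in (-Real.pi)..Real.pi, (lam + t ^ 2) * ‖fourierZ (symmExt f) t‖ ^ 2 := by
    refine intervalIntegral.integral_mono_on (by linarith)
      (Continuous.intervalIntegrable (by fun_prop) _ _)
      (Continuous.intervalIntegrable (by fun_prop) _ _) fun t _ => ?_
    rw [fourierZ_gradient hF, norm_mul, mul_pow, add_mul]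
    have hle : ‖Complex.exp (Complex.I * ((-t : ℝ) : ℂ)) - 1‖ ^ 2 ≤ t ^ 2 := by
      have := Real.norm_exp_I_mul_ofReal_sub_one_le (x := -t)
      rw [norm_neg] at this
      calc _ ≤ ‖t‖ ^ 2 := by gcongr
        _ = t ^ 2 := by simp
    gcongr
  rw [intervalIntegral.integral_add (Continuous.intervalIntegrable (by fun_prop) _ _)
    (Continuous.intervalIntegrable (by fun_prop) _ _), intervalIntegral.integral_const_mul,
    parseval_fourierZ hF, parseval_fourierZ hG, finsum_symmExt_sq hf,
    finsum_gradient_symmExt_sq hf] at key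
  have hnn : 0 ≤ lam * ∑ᶠ y : ℕ, (f y) ^ 2 :=
    mul_nonneg hlam.le (finsum_nonneg fun y => sq_nonneg _)
  rw [one_div, inv_mul_eq_div, le_div_iff₀ (by positivity)]
  nlinarith [mul_nonneg hpi.le hnn]
end
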